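/- Two-sided steady-state bound under MaxWeight (Theorem 5.2, fixed-ε version). Fix n ≥ 1 and ν ∈ F with ν_min := min_{ij} ν_{ij} > 0, arrival means λ_{ij} = (1−ε)ν_{ij}, variances σ_{ij}², and 0 < ε ≤ ν_min/(2‖ν‖). Let π be an invariant distribution of the MaxWeight Markov chain. Then for every integer r ≥ 2: (1 − 1/(2n))·‖σ‖²/ε − B₁ ≤ E_π[∑_{ij} q̄_{ij}] ≤ (1 − 1/(2n))·‖σ‖²/ε + B₂, where B₁ = −nε/2 + n + 3·n^{2−1/r}·ε^{−1/r}·M_r and B₂ = n(1+ε)/2 + 2·n^{2−1/r}·ε^{−1/r}·M_r, with M_r = 2^{1/r} · max( 8(‖λ‖² + ‖σ‖² + n)/ν_min , (√r · e)^{1/r} · 16 · (r/e) · (n·a_max/ν_min) · (n·a_max + 1) ). -/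

import Mathlib

open scoped BigOperators ENNReal

namespace SwitchModel

/-- Next queue state: `q⁺_{ij} = max(q_{ij} + a_{ij} − s_{ij}, 0)` (truncated `ℕ` subtraction). -/
def nextQ (n : ℕ) (q a s : Fin n → Fin n → ℕ) : Fin n → Fin n → ℕ :=
  fun i j => q i j + a i j - s i j

/-- A 0–1 matrix with at most one 1 per row and per column. -/
def IsSchedule (n : ℕ) (s : Fin n → Fin n → ℕ) : Prop :=
  (∀ i j, s i j ≤ 1) ∧ (∀ i, (∑ j, s i j) ≤ 1) ∧ (∀ j, (∑ i, s i j) ≤ 1)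

/-- A permutation matrix: exactly one 1 per row and per column. -/
def IsPerm (n : ℕ) (s : Fin n → Fin n → ℕ) : Prop :=
  (∀ i j, s i j ≤ 1) ∧ (∀ i, (∑ j, s i j) = 1) ∧ (∀ j, (∑ i, s i j) = 1)

/-- MaxWeight selection: `sched q` is a permutation matrix maximizing `∑ q_{ij} s_{ij}`. -/
def IsMaxWeight (n : ℕ) (sched : (Fin n → Fin n → ℕ) → (Fin n → Fin n → ℕ)) : Prop :=
  ∀ q, IsPerm n (sched q) ∧
    ∀ s, IsPerm n s → (∑ i, ∑ j, q i j * s i j) ≤ (∑ i, ∑ j, q i j * sched q i j)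

/-- Joint arrival probability: the entries are mutually independent with marginals `A i j`. -/
noncomputable def jointA (n : ℕ) (A : Fin n → Fin n → ℕ → ℝ≥0∞) (a : Fin n → Fin n → ℕ) : ℝ≥0∞ :=
  ∏ i, ∏ j, A i j (a i j)

/-- `A i j` is a probability distribution on `ℕ` supported on `[0, amax]`,
with mean `lam i j` and variance `(sig i j)^2`. -/
def ArrivalDist (n : ℕ) (A : Fin n → Fin n → ℕ → ℝ≥0∞)
    (lam sig : Fin n → Fin n → ℝ) (amax : ℕ) : Prop :=
  (∀ i j, (∑' k : ℕ, A i j k) = 1) ∧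
  (∀ i j k, A i j k ≠ 0 → k ≤ amax) ∧
  (∀ i j, (∑' k : ℕ, (A i j k).toReal * (k : ℝ)) = lam i j) ∧
  (∀ i j, (∑' k : ℕ, (A i j k).toReal * ((k : ℝ) - lam i j) ^ 2) = (sig i j) ^ 2)

/-- Transition kernel of the switch under a deterministic scheduling map `sched`. -/
noncomputable def kernelMW (n : ℕ) (A : Fin n → Fin n → ℕ → ℝ≥0∞)
    (sched : (Fin n → Fin n → ℕ) → (Fin n → Fin n → ℕ))
    (q q' : Fin n → Fin n → ℕ) : ℝ≥0∞ :=
  ∑' a : Fin n → Fin n → ℕ, jointA n A a * (if nextQ n q a (sched q) = q' then 1 else 0)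

/-- Transition kernel of the switch under a randomized scheduling policy `pol`
(the schedule is chosen independently of the current arrivals). -/
noncomputable def kernelPol (n : ℕ) (A : Fin n → Fin n → ℕ → ℝ≥0∞)
    (pol : (Fin n → Fin n → ℕ) → (Fin n → Fin n → ℕ) → ℝ≥0∞)
    (q q' : Fin n → Fin n → ℕ) : ℝ≥0∞ :=
  ∑' a : Fin n → Fin n → ℕ, ∑' s : Fin n → Fin n → ℕ,
    jointA n A a * pol q s * (if nextQ n q a s = q' then 1 else 0)

/-- `pd` is an invariant (stationary) probability distribution of the kernel `P`. -/
def IsInvariant (n : ℕ)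
    (P : (Fin n → Fin n → ℕ) → (Fin n → Fin n → ℕ) → ℝ≥0∞)
    (pd : (Fin n → Fin n → ℕ) → ℝ≥0∞) : Prop :=
  (∑' q : Fin n → Fin n → ℕ, pd q) = 1 ∧
  ∀ q', (∑' q : Fin n → Fin n → ℕ, pd q * P q q') = pd q'

/-- The face `F`: nonnegative matrices with all row and column sums equal to 1. -/
def memF (n : ℕ) (ν : Fin n → Fin n → ℝ) : Prop :=
  (∀ i j, 0 ≤ ν i j) ∧ (∀ i, (∑ j, ν i j) = 1) ∧ (∀ j, (∑ i, ν i j) = 1)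

/-- Steady-state expectation of the total queue length `∑_{ij} q_{ij}`. -/
noncomputable def Etot (n : ℕ) (pd : (Fin n → Fin n → ℕ) → ℝ≥0∞) : ℝ≥0∞ :=
  ∑' q : Fin n → Fin n → ℕ, pd q * (∑ i, ∑ j, (q i j : ℝ≥0∞))

/-- Steady-state expectation of `(∑_{ij} q_{ij})²`. -/
noncomputable def Etot2 (n : ℕ) (pd : (Fin n → Fin n → ℕ) → ℝ≥0∞) : ℝ≥0∞ :=
  ∑' q : Fin n → Fin n → ℕ, pd q * (∑ i, ∑ j, (q i j : ℝ≥0∞)) ^ 2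

/-- Euclidean norm on `ℝ^{n×n}`. -/
noncomputable def normE (n : ℕ) (x : Fin n → Fin n → ℝ) : ℝ :=
  Real.sqrt (∑ i, ∑ j, x i j ^ 2)

/-- The cone `K = {x : x_{ij} = w_i + w̃_j, w, w̃ ≥ 0}`. -/
def coneK (n : ℕ) : Set (Fin n → Fin n → ℝ) :=
  {x | ∃ w wt : Fin n → ℝ, (∀ i, 0 ≤ w i) ∧ (∀ j, 0 ≤ wt j) ∧ ∀ i j, x i j = w i + wt j}

/-- Embedding of queue states into `ℝ^{n×n}`. -/
def toR (n : ℕ) (q : Fin n → Fin n → ℕ) : Fin n → Fin n → ℝ :=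
  fun i j => (q i j : ℝ)

/-- `proj` is the nearest-point projection onto the cone `K`. -/
def IsConeProj (n : ℕ) (proj : (Fin n → Fin n → ℝ) → (Fin n → Fin n → ℝ)) : Prop :=
  ∀ x, proj x ∈ coneK n ∧ ∀ y ∈ coneK n, normE n (x - proj x) ≤ normE n (x - y)

/-- Bernoulli distribution on `ℕ` with success probability `p`. -/
noncomputable def bern (p : ℝ) : ℕ → ℝ≥0∞ :=
  fun k => if k = 0 then ENNReal.ofReal (1 - p) else if k = 1 then ENNReal.ofReal p else 0

end SwitchModel

open SwitchModel

/-!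
Let `P` be the orthogonal projection of `ℝ^{n×n}` onto the subspace of matrices `(w i + v j)`, and
`u = q⁺ - (q + a - s)` the unused service. Permutation matrices and the points of the face `F` have
the same image under `P`, so stationarity of `‖P q‖²` expresses `E ∑ q` through the variances of
the arrivals, `E ‖P u‖²` and the cross term `E ⟪P q⁺, P u⟫`. Since `u` lives on the empty queues,
`⟪q⁺, u⟫ = 0`, and the cross term is at most `E [dist(q⁺, K) ‖u‖]`, `K` being the cone of the
nonnegative matrices `(w i + v j)`.

MaxWeight makes `dist(q, K)` drift down at a rate comparable to `νmin`, uniformly in `ε`: a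
nonnegative stationary process with bounded jumps and negative drift has geometric tails, which
bounds the moments of `dist(q, K)` independently of `ε`. Hölder's inequality and `E ‖u‖² = n ε` then
bound the cross term.
-/

namespace SwitchModel

open MeasureTheory ProbabilityTheory Filter
open scoped Topology Nat RealInnerProductSpace

section GeometricTail

lemma natCast_choose_eq_tsum_indicator {Ω : Type*} (N : Ω → ℕ) (k : ℕ) (ω : Ω) :
    ((N ω + (k + 1)).choose (k + 1) : ℝ≥0∞) =
      ∑' i, {ω | i ≤ N ω}.indicator (fun _ => ((i + k).choose k : ℝ≥0∞)) ω := by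
  rw [← add_assoc, ← Nat.sum_range_add_choose, Nat.cast_sum,
    tsum_eq_sum (s := Finset.range (N ω + 1)) (by
      intro i hi
      exact Set.indicator_of_notMem (by simpa [Nat.lt_succ_iff] using hi) _)]
  refine Finset.sum_congr rfl fun i hi => ?_
  rw [Set.indicator_of_mem (by simpa [Nat.lt_succ_iff] using hi)]

variable {Ω : Type*} [MeasurableSpace Ω] {μ : Measure Ω} {N : Ω → ℕ} {ρ : ℝ}

lemma lintegral_choose_le_of_geometric_tail (hN : Measurable N) (hρ₀ : 0 ≤ ρ) (hρ₁ : ρ < 1)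
    (htail : ∀ k, μ {ω | k ≤ N ω} ≤ ENNReal.ofReal (ρ ^ k)) (k : ℕ) :
    ∫⁻ ω, ((N ω + (k + 1)).choose (k + 1) : ℝ≥0∞) ∂μ ≤
      ENNReal.ofReal (1 / (1 - ρ) ^ (k + 1)) := by
  have hmeas (i : ℕ) : MeasurableSet {ω | i ≤ N ω} := measurableSet_le measurable_const hN
  have hsum := hasSum_choose_mul_geometric_of_norm_lt_one k
    (r := ρ) (by rwa [Real.norm_of_nonneg hρ₀])
  calc ∫⁻ ω, ((N ω + (k + 1)).choose (k + 1) : ℝ≥0∞) ∂μ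
      = ∑' i, ((i + k).choose k : ℝ≥0∞) * μ {ω | i ≤ N ω} := by
        simp_rw [natCast_choose_eq_tsum_indicator]
        rw [lintegral_tsum fun i => (measurable_const.indicator (hmeas i)).aemeasurable]
        simp_rw [lintegral_indicator_const (hmeas _)]
    _ ≤ ∑' i, ENNReal.ofReal ((i + k).choose k * ρ ^ i) := by
        refine ENNReal.tsum_le_tsum fun i => ?_
        rw [ENNReal.ofReal_mul (by positivity), ENNReal.ofReal_natCast]
        gcongr
        exact htail i
    _ = ENNReal.ofReal (1 / (1 - ρ) ^ (k + 1)) := by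
        rw [← ENNReal.ofReal_tsum_of_nonneg (fun i => by positivity) hsum.summable,
          hsum.tsum_eq]

lemma pow_le_factorial_mul_choose (m r : ℕ) : m ^ r ≤ r ! * (m + r).choose r := by
  rw [← Nat.descFactorial_eq_factorial_mul_choose]
  calc m ^ r ≤ (m + r + 1 - r) ^ r := Nat.pow_le_pow_left (by omega) r
    _ ≤ (m + r).descFactorial r := Nat.pow_sub_le_descFactorial (m + r) r

lemma lintegral_pow_le_of_geometric_tail [IsProbabilityMeasure μ] (hN : Measurable N)
    (hρ₀ : 0 ≤ ρ) (hρ₁ : ρ < 1) (htail : ∀ k, μ {ω | k ≤ N ω} ≤ ENNReal.ofReal (ρ ^ k)) (r : ℕ) :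
    ∫⁻ ω, (N ω : ℝ≥0∞) ^ r ∂μ ≤ ENNReal.ofReal (r ! * (1 / (1 - ρ)) ^ r) := by
  cases r with
  | zero => simp
  | succ k =>
    calc ∫⁻ ω, (N ω : ℝ≥0∞) ^ (k + 1) ∂μ
        ≤ ∫⁻ ω, ((k + 1)! : ℝ≥0∞) * ((N ω + (k + 1)).choose (k + 1) : ℝ≥0∞) ∂μ :=
          lintegral_mono fun ω => by
            rw [← Nat.cast_pow, ← Nat.cast_mul, Nat.cast_le]
            exact pow_le_factorial_mul_choose (N ω) (k + 1)
      _ = ((k + 1)! : ℝ≥0∞) * ∫⁻ ω, ((N ω + (k + 1)).choose (k + 1) : ℝ≥0∞) ∂μ :=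
          lintegral_const_mul' _ _ (ENNReal.natCast_ne_top _)
      _ ≤ ((k + 1)! : ℝ≥0∞) * ENNReal.ofReal (1 / (1 - ρ) ^ (k + 1)) := by
          gcongr
          exact lintegral_choose_le_of_geometric_tail hN hρ₀ hρ₁ htail k
      _ = ENNReal.ofReal ((k + 1)! * (1 / (1 - ρ)) ^ (k + 1)) := by
          rw [ENNReal.ofReal_mul (by positivity), ENNReal.ofReal_natCast, one_div_pow]

lemma integrable_pow_of_geometric_tail [IsProbabilityMeasure μ] (hN : Measurable N)
    (hρ₀ : 0 ≤ ρ) (hρ₁ : ρ < 1) (htail : ∀ k, μ {ω | k ≤ N ω} ≤ ENNReal.ofReal (ρ ^ k)) (r : ℕ) :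
    Integrable (fun ω => (N ω : ℝ) ^ r) μ := by
  refine ⟨(by fun_prop), ?_⟩
  rw [hasFiniteIntegral_iff_ofReal (ae_of_all _ fun ω => by positivity)]
  refine lt_of_eq_of_lt (lintegral_congr fun ω => ?_)
    ((lintegral_pow_le_of_geometric_tail hN hρ₀ hρ₁ htail r).trans_lt ENNReal.ofReal_lt_top)
  rw [ENNReal.ofReal_pow (Nat.cast_nonneg _), ENNReal.ofReal_natCast]

lemma integral_pow_le_of_geometric_tail [IsProbabilityMeasure μ] (hN : Measurable N)
    (hρ₀ : 0 ≤ ρ) (hρ₁ : ρ < 1) (htail : ∀ k, μ {ω | k ≤ N ω} ≤ ENNReal.ofReal (ρ ^ k)) (r : ℕ) :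
    ∫ ω, (N ω : ℝ) ^ r ∂μ ≤ r ! * (1 / (1 - ρ)) ^ r := by
  have : 0 < 1 - ρ := sub_pos.2 hρ₁
  rw [integral_eq_lintegral_of_nonneg_ae (ae_of_all _ fun ω => by positivity)
    (by fun_prop)]
  refine ENNReal.toReal_le_of_le_ofReal (by positivity) (le_of_eq_of_le ?_
    (lintegral_pow_le_of_geometric_tail hN hρ₀ hρ₁ htail r))
  refine lintegral_congr fun ω => ?_
  rw [ENNReal.ofReal_pow (Nat.cast_nonneg _), ENNReal.ofReal_natCast]

end GeometricTail

section StationaryDrift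

variable {Ω : Type*} [MeasurableSpace Ω] {μ : Measure Ω} {X Y : Ω → ℝ} {D η B : ℝ}

/-- `X` and `Y` stand for the values `V qₜ` and `V qₜ₊₁` of a Lyapunov function `V` along a
stationary chain: they have the same law, differ by at most `D`, and `Y - X` has conditional mean
at most `-η` given `X` wherever `B < X`. The conditional mean is encoded by integrals over the
events `X ∈ s`, so that no integrability of `X` is presupposed. -/
structure IsStationaryDriftPair (μ : Measure Ω) (X Y : Ω → ℝ) (D η B : ℝ) : Prop where
  measurable : Measurable X
  identDistrib : IdentDistrib X Y μ μ
  abs_sub_le : ∀ᵐ ω ∂μ, |Y ω - X ω| ≤ D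
  setIntegral_sub_le : ∀ s : Set ℝ, MeasurableSet s → s ⊆ Set.Ioi B →
    ∫ ω in X ⁻¹' s, (Y ω - X ω) ∂μ ≤ -η * μ.real (X ⁻¹' s)

lemma clip_sub_clip_le {c M x y : ℝ} (hcM : c ≤ M) (hxy : |y - x| ≤ D) :
    min (max y c) M - min (max x c) M ≤
      (Set.Ioi (c - D)).indicator (fun _ => D) x - (Set.Ioi (c + D)).indicator (fun _ => D) x +
        (Set.Ioc (c + D) M).indicator (fun x => y - x) x := by
  obtain ⟨hyx₁, hyx₂⟩ := abs_le.1 hxy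
  simp only [Set.indicator_apply, Set.mem_Ioi, Set.mem_Ioc]
  rcases le_or_gt x (c - D) with h₁ | h₁ <;> rcases le_or_gt x (c + D) with h₂ | h₂ <;>
    rcases le_or_gt x M with h₃ | h₃ <;> rcases min_cases (max y c) M with h | h <;>
    rcases min_cases (max x c) M with h' | h' <;> rcases max_cases y c with h'' | h'' <;>
    rcases max_cases x c with h''' | h''' <;> grind

lemma integrable_clip [IsFiniteMeasure μ] (hX : AEMeasurable X μ) {c M : ℝ} (hcM : c ≤ M) :
    Integrable (fun ω => min (max (X ω) c) M) μ :=
  .of_mem_Icc c M ((hX.max aemeasurable_const).min aemeasurable_const)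
    (ae_of_all _ fun _ => ⟨le_min (le_max_right _ _) hcM, min_le_right _ _⟩)

lemma integral_clip_sub_clip_eq_zero [IsFiniteMeasure μ] (hXY : IdentDistrib X Y μ μ) {c M : ℝ}
    (hcM : c ≤ M) : ∫ ω, (min (max (Y ω) c) M - min (max (X ω) c) M) ∂μ = 0 := by
  rw [integral_sub (integrable_clip hXY.aemeasurable_snd hcM)
    (integrable_clip hXY.aemeasurable_fst hcM), sub_eq_zero]
  have hclip : Measurable fun x : ℝ => min (max x c) M := by fun_prop
  exact (hXY.comp hclip).integral_eq.symm

namespace IsStationaryDriftPair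

variable [IsProbabilityMeasure μ]

lemma mul_measureReal_Ioi_add_le (h : IsStationaryDriftPair μ X Y D η B) {c M : ℝ}
    (hcM : c ≤ M) (hBc : B ≤ c + D) :
    D * μ.real (X ⁻¹' Set.Ioi (c + D)) + η * μ.real (X ⁻¹' Set.Ioc (c + D) M) ≤
      D * μ.real (X ⁻¹' Set.Ioi (c - D)) := by
  have hX := h.measurable.aemeasurable (μ := μ)
  have hY := h.identDistrib.aemeasurable_snd
  have hmeas {s : Set ℝ} (hs : MeasurableSet s) : MeasurableSet (X ⁻¹' s) := h.measurable hs
  have hind_int (c : ℝ) : Integrable (fun ω => (X ⁻¹' Set.Ioi c).indicator (fun _ => D) ω) μ :=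
    (integrable_const D).indicator (hmeas measurableSet_Ioi)
  have hsub_int :
      Integrable (fun ω => (X ⁻¹' Set.Ioc (c + D) M).indicator (fun ω => Y ω - X ω) ω) μ :=
    (Integrable.of_bound (hY.sub hX).aestronglyMeasurable D h.abs_sub_le).indicator
      (hmeas measurableSet_Ioc)
  have hdiff_int : Integrable (fun ω => (X ⁻¹' Set.Ioi (c - D)).indicator (fun _ => D) ω -
      (X ⁻¹' Set.Ioi (c + D)).indicator (fun _ => D) ω) μ := (hind_int _).sub (hind_int _)
  have hle : 0 ≤ ∫ ω, ((X ⁻¹' Set.Ioi (c - D)).indicator (fun _ => D) ω -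
      (X ⁻¹' Set.Ioi (c + D)).indicator (fun _ => D) ω +
      (X ⁻¹' Set.Ioc (c + D) M).indicator (fun ω => Y ω - X ω) ω) ∂μ := by
    rw [← integral_clip_sub_clip_eq_zero h.identDistrib hcM]
    refine integral_mono_ae ((integrable_clip hY hcM).sub (integrable_clip hX hcM))
      (hdiff_int.add hsub_int) ?_
    filter_upwards [h.abs_sub_le] with ω hω using clip_sub_clip_le hcM hω
  rw [integral_add hdiff_int hsub_int,
    integral_sub (hind_int _) (hind_int _), integral_indicator_const _ (hmeas measurableSet_Ioi),
    integral_indicator_const _ (hmeas measurableSet_Ioi),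
    integral_indicator (hmeas measurableSet_Ioc), smul_eq_mul, smul_eq_mul] at hle
  have hdrift := h.setIntegral_sub_le (Set.Ioc (c + D) M) measurableSet_Ioc
    fun x hx => hBc.trans_lt hx.1
  linarith

lemma measureReal_Ioi_add_le (h : IsStationaryDriftPair μ X Y D η B) {c : ℝ}
    (hBc : B ≤ c + D) :
    (D + η) * μ.real (X ⁻¹' Set.Ioi (c + D)) ≤ D * μ.real (X ⁻¹' Set.Ioi (c - D)) := by
  have hlim : Tendsto (fun M => μ.real (X ⁻¹' Set.Ioc (c + D) M)) atTop
      (𝓝 (μ.real (X ⁻¹' Set.Ioi (c + D)))) := by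
    rw [← Set.iUnion_Ioc_right, Set.preimage_iUnion]
    refine (ENNReal.tendsto_toReal (measure_ne_top _ _)).comp
      (tendsto_measure_iUnion_atTop fun M M' hM => ?_)
    exact Set.preimage_mono (Set.Ioc_subset_Ioc_right hM)
  rw [add_mul]
  refine le_of_tendsto ((hlim.const_mul η).const_add _) ?_
  filter_upwards [eventually_ge_atTop c] with M hM using h.mul_measureReal_Ioi_add_le hM hBc

lemma measureReal_Ioi_le (h : IsStationaryDriftPair μ X Y D η B) (hD : 0 < D) (hη : 0 < η)
    (k : ℕ) : μ.real (X ⁻¹' Set.Ioi (B + 2 * D * k)) ≤ (D / (D + η)) ^ (k + 1) := by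
  have hstep (c : ℝ) (hBc : B ≤ c + D) :
      μ.real (X ⁻¹' Set.Ioi (c + D)) ≤ D / (D + η) * μ.real (X ⁻¹' Set.Ioi (c - D)) := by
    rw [div_mul_eq_mul_div, le_div_iff₀' (by positivity)]
    exact h.measureReal_Ioi_add_le hBc
  induction k with
  | zero =>
    calc μ.real (X ⁻¹' Set.Ioi (B + 2 * D * (0 : ℕ)))
        = μ.real (X ⁻¹' Set.Ioi (B - D + D)) := by congr 3; push_cast; ring
      _ ≤ D / (D + η) * μ.real (X ⁻¹' Set.Ioi (B - D - D)) := hstep _ (by linarith)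
      _ ≤ (D / (D + η)) ^ (0 + 1) := by
        rw [zero_add, pow_one]
        exact mul_le_of_le_one_right (by positivity) measureReal_le_one
  | succ k ih =>
    calc μ.real (X ⁻¹' Set.Ioi (B + 2 * D * (k + 1 : ℕ)))
        = μ.real (X ⁻¹' Set.Ioi (B + 2 * D * k + D + D)) := by congr 3; push_cast; ring
      _ ≤ D / (D + η) * μ.real (X ⁻¹' Set.Ioi (B + 2 * D * k + D - D)) :=
        hstep _ (by nlinarith [(Nat.cast_nonneg k : (0 : ℝ) ≤ k)])
      _ ≤ D / (D + η) * (D / (D + η)) ^ (k + 1) := by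
        rw [add_sub_cancel_right]
        gcongr
      _ = (D / (D + η)) ^ (k + 1 + 1) := (pow_succ' _ _).symm

lemma measure_le_ceil_le (h : IsStationaryDriftPair μ X Y D η B) (hD : 0 < D) (hη : 0 < η)
    (k : ℕ) :
    μ {ω | k ≤ ⌈(X ω - B) / (2 * D)⌉₊} ≤ ENNReal.ofReal ((D / (D + η)) ^ k) := by
  cases k with
  | zero => simp
  | succ k =>
    have hset : {ω | k + 1 ≤ ⌈(X ω - B) / (2 * D)⌉₊} = X ⁻¹' Set.Ioi (B + 2 * D * k) := by
      ext ω
      simp only [Set.mem_ofPred_eq, Nat.add_one_le_iff, Nat.lt_ceil, Set.mem_preimage, Set.mem_Ioi]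
      rw [lt_div_iff₀ (by positivity), lt_sub_iff_add_lt']
      ring_nf
    rw [hset, ← ofReal_measureReal]
    exact ENNReal.ofReal_le_ofReal (h.measureReal_Ioi_le hD hη k)

lemma pow_le_add_ceil_pow {x : ℝ} (hx : 0 ≤ x) (hB : 0 ≤ B) (hD : 0 < D) (r : ℕ) :
    x ^ r ≤ (2 * B) ^ r + (4 * D) ^ r * (⌈(x - B) / (2 * D)⌉₊ : ℝ) ^ r := by
  set N := ⌈(x - B) / (2 * D)⌉₊
  have hxN : x ≤ B + 2 * D * N := by
    have := (div_le_iff₀ (by positivity)).1 (Nat.le_ceil ((x - B) / (2 * D)))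
    linarith
  calc x ^ r ≤ (B + 2 * D * N) ^ r := by gcongr
    _ ≤ 2 ^ (r - 1) * (B ^ r + (2 * D * N) ^ r) := add_pow_le hB (by positivity) r
    _ ≤ 2 ^ r * (B ^ r + (2 * D * N) ^ r) := by
      gcongr
      · norm_num
      · omega
    _ = (2 * B) ^ r + (4 * D) ^ r * (N : ℝ) ^ r := by
      rw [mul_add, ← mul_pow, ← mul_pow, ← mul_pow]
      ring_nf

lemma integrable_pow (h : IsStationaryDriftPair μ X Y D η B) (hX : 0 ≤ X) (hB : 0 ≤ B)
    (hD : 0 < D) (hη : 0 < η) (r : ℕ) : Integrable (fun ω => X ω ^ r) μ := by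
  have hX_meas := h.measurable
  have hN := integrable_pow_of_geometric_tail (by fun_prop) (by positivity)
    ((div_lt_one (by positivity)).2 (by linarith)) (h.measure_le_ceil_le hD hη) r
  refine ((integrable_const ((2 * B) ^ r)).add (hN.const_mul ((4 * D) ^ r))).mono'
    (by fun_prop) (ae_of_all _ fun ω => ?_)
  rw [Real.norm_of_nonneg (pow_nonneg (hX ω) r)]
  exact pow_le_add_ceil_pow (hX ω) hB hD r

lemma integral_pow_le (h : IsStationaryDriftPair μ X Y D η B) (hX : 0 ≤ X) (hB : 0 ≤ B)
    (hD : 0 < D) (hη : 0 < η) (r : ℕ) :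
    ∫ ω, X ω ^ r ∂μ ≤ (2 * B) ^ r + (4 * D * (D + η) / η) ^ r * r ! := by
  have hX_meas := h.measurable
  have hρ : D / (D + η) < 1 := (div_lt_one (by positivity)).2 (by linarith)
  have hN := integrable_pow_of_geometric_tail (by fun_prop) (by positivity) hρ
    (h.measure_le_ceil_le hD hη) r
  calc ∫ ω, X ω ^ r ∂μ
      ≤ ∫ ω, ((2 * B) ^ r + (4 * D) ^ r * (⌈(X ω - B) / (2 * D)⌉₊ : ℝ) ^ r) ∂μ :=
        integral_mono (h.integrable_pow hX hB hD hη r)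
          ((integrable_const _).add (hN.const_mul _))
          fun ω => pow_le_add_ceil_pow (hX ω) hB hD r
    _ = (2 * B) ^ r + (4 * D) ^ r * ∫ ω, (⌈(X ω - B) / (2 * D)⌉₊ : ℝ) ^ r ∂μ := by
        rw [integral_add (integrable_const _) (hN.const_mul _), integral_const_mul]
        simp
    _ ≤ (2 * B) ^ r + (4 * D) ^ r * (r ! * (1 / (1 - D / (D + η))) ^ r) := by
        gcongr
        exact integral_pow_le_of_geometric_tail (by fun_prop) (by positivity) hρ
          (h.measure_le_ceil_le hD hη) r
    _ = (2 * B) ^ r + (4 * D * (D + η) / η) ^ r * r ! := by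
        have : 1 / (1 - D / (D + η)) = (D + η) / η := by
          rw [one_sub_div (by positivity), add_sub_cancel_left, one_div_div]
        rw [this, mul_left_comm, ← mul_pow, mul_div_assoc, mul_comm (r ! : ℝ)]

end IsStationaryDriftPair

lemma isStationaryDriftPair_of_measurePreserving {Q 𝒜 : Type*} [MeasurableSpace Q]
    [MeasurableSpace 𝒜] {π : Measure Q} [IsFiniteMeasure π] {α : Measure 𝒜}
    [IsProbabilityMeasure α] {T : Q × 𝒜 → Q} (hT : MeasurePreserving T (π.prod α) π)
    {V : Q → ℝ} (hV : Measurable V) (hjump : ∀ᵐ p ∂π.prod α, |V (T p) - V p.1| ≤ D)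
    (hdrift : ∀ q, B < V q → ∫ a, (V (T (q, a)) - V q) ∂α ≤ -η) :
    IsStationaryDriftPair (π.prod α) (fun p => V p.1) (fun p => V (T p)) D η B where
  measurable := hV.comp measurable_fst
  identDistrib :=
    { aemeasurable_fst := (hV.comp measurable_fst).aemeasurable
      aemeasurable_snd := (hV.comp hT.measurable).aemeasurable
      map_eq := by
        rw [← Function.comp_def V, ← Function.comp_def V, ← Measure.map_map hV measurable_fst,
          ← Measure.map_map hV hT.measurable, hT.map_eq, measurePreserving_fst.map_eq] }
  abs_sub_le := hjump
  setIntegral_sub_le s hs hsB := by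
    have hint : Integrable (fun p => V (T p) - V p.1) (π.prod α) :=
      .of_bound ((hV.comp hT.measurable).sub (hV.comp measurable_fst)).aestronglyMeasurable D
        (by simpa only [Real.norm_eq_abs] using hjump)
    have hpre : (fun p : Q × 𝒜 => V p.1) ⁻¹' s = (V ⁻¹' s) ×ˢ Set.univ := by
      ext p; simp
    rw [hpre, setIntegral_prod _ hint.integrableOn, measureReal_prod_prod, probReal_univ, mul_one]
    calc ∫ q in V ⁻¹' s, ∫ a in Set.univ, (V (T (q, a)) - V q) ∂α ∂π
        ≤ ∫ _ in V ⁻¹' s, -η ∂π := by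
          simp_rw [setIntegral_univ]
          exact setIntegral_mono_on hint.integral_prod_left.integrableOn
            (integrable_const _).integrableOn (hV hs) fun q hq => hdrift q (hsB hq)
      _ = -η * π.real (V ⁻¹' s) := by
          rw [setIntegral_const, smul_eq_mul, mul_comm]

lemma integral_sub_le_of_integral_sq_le {𝒜 : Type*} [MeasurableSpace 𝒜] {α : Measure 𝒜}
    [IsProbabilityMeasure α] {f : 𝒜 → ℝ} {v c κ : ℝ} (hf : MemLp f 2 α) (hc : 0 ≤ c)
    (hκ : 0 < κ) (hv : 4 * c / κ < v) (hsq : ∫ a, f a ^ 2 ∂α ≤ v ^ 2 + c - κ * v) :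
    ∫ a, (f a - v) ∂α ≤ -(κ / 4) := by
  have hv₀ : 0 < v := lt_of_le_of_lt (by positivity) hv
  have hcκ : 4 * c < κ * v := by rw [div_lt_iff₀ hκ] at hv; linarith
  have hf₁ : Integrable f α := hf.integrable (by norm_num)
  have hsub : ∫ a, (f a - v) ∂α = ∫ a, f a ∂α - v := by
    rw [integral_sub hf₁ (integrable_const v)]
    simp
  have hmean : 2 * v * ∫ a, f a ∂α ≤ ∫ a, f a ^ 2 ∂α + v ^ 2 := by
    calc 2 * v * ∫ a, f a ∂α = ∫ a, 2 * v * f a ∂α := (integral_const_mul _ _).symm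
      _ ≤ ∫ a, (f a ^ 2 + v ^ 2) ∂α :=
        integral_mono (hf₁.const_mul _) (hf.integrable_sq.add (integrable_const _))
          fun a => by nlinarith only [sq_nonneg (f a - v)]
      _ = ∫ a, f a ^ 2 ∂α + v ^ 2 := by
        rw [integral_add hf.integrable_sq (integrable_const _)]
        simp
  rw [hsub]
  refine le_of_mul_le_mul_left (a := 2 * v) ?_ (by positivity)
  nlinarith only [hv₀, hcκ, hsq, hmean, mul_pos hκ hv₀]

end StationaryDrift

section UncorrelatedCoords

variable {Ω ι : Type*} [MeasurableSpace Ω] {μ : Measure Ω}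
  {E F : Type*} [NormedAddCommGroup E] [InnerProductSpace ℝ E]
  [NormedAddCommGroup F] [InnerProductSpace ℝ F]

lemma integrable_inner_of_memLp_two {f g : Ω → E} (hf : MemLp f 2 μ) (hg : MemLp g 2 μ) :
    Integrable (fun ω => ⟪f ω, g ω⟫) μ :=
  (hf.norm.integrable_mul hg.norm).mono' (hf.1.inner hg.1)
    (ae_of_all _ fun _ => norm_inner_le_norm _ _)

lemma norm_map_sq_eq_sum [Fintype ι] [DecidableEq ι] (L : EuclideanSpace ℝ ι →L[ℝ] F)
    (x : EuclideanSpace ℝ ι) :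
    ‖L x‖ ^ 2 = ∑ i, ∑ j, x i * x j *
      ⟪L (EuclideanSpace.single i 1), L (EuclideanSpace.single j 1)⟫ := by
  have hx : L x = ∑ i, x i • L (EuclideanSpace.single i 1) := by
    conv_lhs => rw [← (EuclideanSpace.basisFun ι ℝ).sum_repr x]
    simp
  rw [← real_inner_self_eq_norm_sq, hx, sum_inner]
  simp only [inner_sum, real_inner_smul_left, real_inner_smul_right, mul_assoc]
  exact Finset.sum_congr rfl fun i _ => Finset.sum_congr rfl fun j _ => mul_left_comm _ _ _

/-- A square-integrable random vector with mean `m` whose coordinates are uncorrelated with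
variances `σ i ^ 2`. -/
structure HasUncorrelatedCoords [Fintype ι] [DecidableEq ι] (μ : Measure Ω)
    (X : Ω → EuclideanSpace ℝ ι) (m σ : EuclideanSpace ℝ ι) : Prop where
  memLp : MemLp X 2 μ
  integral_eq : ∫ ω, X ω ∂μ = m
  integral_mul_eq : ∀ i j, ∫ ω, (X ω - m) i * (X ω - m) j ∂μ = if i = j then σ i ^ 2 else 0

namespace HasUncorrelatedCoords

variable [Fintype ι] [DecidableEq ι] {X : Ω → EuclideanSpace ℝ ι} {m σ : EuclideanSpace ℝ ι}
  [IsProbabilityMeasure μ]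

lemma integral_sub_eq_zero (hX : HasUncorrelatedCoords μ X m σ) : ∫ ω, (X ω - m) ∂μ = 0 := by
  rw [integral_sub (hX.memLp.integrable one_le_two) (integrable_const m), hX.integral_eq]
  simp

lemma integral_apply (hX : HasUncorrelatedCoords μ X m σ) (i : ι) : ∫ ω, X ω i ∂μ = m i := by
  rw [← hX.integral_eq]
  exact (EuclideanSpace.proj (𝕜 := ℝ) i).integral_comp_comm (hX.memLp.integrable one_le_two)

lemma integral_inner_eq_zero (hX : HasUncorrelatedCoords μ X m σ)
    (L : EuclideanSpace ℝ ι →L[ℝ] F) (w : F) : ∫ ω, ⟪L (X ω - m), w⟫ ∂μ = 0 := by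
  have hint : Integrable (fun ω => X ω - m) μ :=
    (hX.memLp.integrable one_le_two).sub (integrable_const m)
  simpa [hX.integral_sub_eq_zero, real_inner_comm] using
    ((innerSL ℝ w).comp L).integral_comp_comm hint

lemma integral_norm_sq_map_sub (hX : HasUncorrelatedCoords μ X m σ)
    (L : EuclideanSpace ℝ ι →L[ℝ] F) :
    ∫ ω, ‖L (X ω - m)‖ ^ 2 ∂μ = ∑ i, σ i ^ 2 * ‖L (EuclideanSpace.single i 1)‖ ^ 2 := by
  have hcoord (i : ι) : MemLp (fun ω => (X ω - m) i) 2 μ :=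
    (hX.memLp.sub (memLp_const m)).eval_piLp i
  conv_lhs => simp only [norm_map_sq_eq_sum]
  have hint (i j : ι) : Integrable (fun ω => (X ω - m) i * (X ω - m) j *
      ⟪L (EuclideanSpace.single i 1), L (EuclideanSpace.single j 1)⟫) μ :=
    ((hcoord i).integrable_mul (hcoord j)).mul_const _
  rw [integral_finsetSum _ fun i _ => integrable_finsetSum _ fun j _ => hint i j]
  refine Finset.sum_congr rfl fun i _ => ?_
  rw [integral_finsetSum _ fun j _ => hint i j]
  simp_rw [integral_mul_const, hX.integral_mul_eq, ite_mul, zero_mul]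
  rw [Finset.sum_ite_eq, if_pos (Finset.mem_univ i), real_inner_self_eq_norm_sq]

lemma integral_norm_sq_map_add (hX : HasUncorrelatedCoords μ X m σ)
    (L : EuclideanSpace ℝ ι →L[ℝ] F) (w : F) :
    ∫ ω, ‖L (X ω) + w‖ ^ 2 ∂μ =
      ∑ i, σ i ^ 2 * ‖L (EuclideanSpace.single i 1)‖ ^ 2 + ‖L m + w‖ ^ 2 := by
  have hL : MemLp (fun ω => L (X ω - m)) 2 μ := L.comp_memLp' (hX.memLp.sub (memLp_const m))
  have hexpand (ω : Ω) : ‖L (X ω) + w‖ ^ 2 =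
      ‖L (X ω - m)‖ ^ 2 + 2 * ⟪L (X ω - m), L m + w⟫ + ‖L m + w‖ ^ 2 := by
    rw [← norm_add_sq_real, map_sub, ← add_assoc, sub_add_cancel]
  simp_rw [hexpand]
  have hsq := hL.norm.integrable_sq
  have hcross : Integrable (fun ω => 2 * ⟪L (X ω - m), L m + w⟫) μ :=
    ((hL.inner_const (𝕜 := ℝ) _).integrable one_le_two).const_mul 2
  rw [integral_add (by exact hsq.add hcross) (integrable_const _), integral_add hsq hcross,
    integral_const_mul, hX.integral_inner_eq_zero, hX.integral_norm_sq_map_sub]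
  simp

end HasUncorrelatedCoords

end UncorrelatedCoords

lemma integral_mul_sqrt_le {Ω : Type*} [MeasurableSpace Ω] {μ : Measure Ω} {f t : Ω → ℝ} {r : ℝ}
    (hr : 2 ≤ r) (hf : 0 ≤ f) (ht : ∀ ω, t ω = 0 ∨ 1 ≤ t ω) (hf_meas : AEStronglyMeasurable f μ)
    (hf_int : Integrable (fun ω => f ω ^ r) μ) (ht_int : Integrable t μ) :
    ∫ ω, f ω * √(t ω) ∂μ ≤ (∫ ω, f ω ^ r ∂μ) ^ (1 / r) * (∫ ω, t ω ∂μ) ^ (1 - 1 / r) := by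
  have hr₀ : 0 < r := by linarith
  obtain ⟨s, hrs⟩ : ∃ s, r.HolderConjugate s := ⟨_, .conjExponent (by linarith)⟩
  have hs₀ : 0 < s := hrs.symm.pos
  have hs : s⁻¹ = 1 - 1 / r := by rw [one_div]; linarith [hrs.inv_add_inv_eq_one]
  have ht₀ (ω) : 0 ≤ t ω := by rcases ht ω with h | h <;> linarith
  have hpow (ω) : (t ω ^ s⁻¹) ^ s = t ω := Real.rpow_inv_rpow (ht₀ ω) hs₀.ne'
  have hsqrt (ω) : √(t ω) ≤ t ω ^ s⁻¹ := by
    have hhalf : 1 / 2 ≤ s⁻¹ := by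
      rw [hs]
      linarith [one_div_le_one_div_of_le two_pos hr]
    rw [Real.sqrt_eq_rpow]
    rcases ht ω with h | h
    · rw [h, Real.zero_rpow (by norm_num), Real.zero_rpow (by positivity)]
    · exact Real.rpow_le_rpow_of_exponent_le h hhalf
  have ht_meas : AEStronglyMeasurable (fun ω => t ω ^ s⁻¹) μ :=
    (ht_int.aemeasurable.pow_const _).aestronglyMeasurable
  have hf_Lp : MemLp f (ENNReal.ofReal r) μ := by
    rw [← integrable_norm_rpow_iff hf_meas (by simpa using hr₀) (by simp)]
    simpa only [ENNReal.toReal_ofReal hr₀.le, Real.norm_of_nonneg (hf _)] using hf_int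
  have ht_Lp : MemLp (fun ω => t ω ^ s⁻¹) (ENNReal.ofReal s) μ := by
    rw [← integrable_norm_rpow_iff ht_meas (by simpa using hs₀) (by simp)]
    simpa only [ENNReal.toReal_ofReal hs₀.le, Real.norm_of_nonneg (Real.rpow_nonneg (ht₀ _) _),
      hpow] using ht_int
  have : ENNReal.HolderTriple (ENNReal.ofReal r) (ENNReal.ofReal s) 1 := hrs.ennrealOfReal
  calc ∫ ω, f ω * √(t ω) ∂μ ≤ ∫ ω, f ω * t ω ^ s⁻¹ ∂μ :=
        integral_mono_of_nonneg
          (ae_of_all _ fun ω => mul_nonneg (hf ω) (Real.sqrt_nonneg _))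
          (hf_Lp.integrable_mul ht_Lp)
          (ae_of_all _ fun ω => mul_le_mul_of_nonneg_left (hsqrt ω) (hf ω))
    _ ≤ (∫ ω, f ω ^ r ∂μ) ^ (1 / r) * (∫ ω, (t ω ^ s⁻¹) ^ s ∂μ) ^ (1 / s) :=
        integral_mul_le_Lp_mul_Lq_of_nonneg hrs (ae_of_all _ hf)
          (ae_of_all _ fun ω => Real.rpow_nonneg (ht₀ ω) _) hf_Lp ht_Lp
    _ = (∫ ω, f ω ^ r ∂μ) ^ (1 / r) * (∫ ω, t ω ∂μ) ^ (1 - 1 / r) := by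
        simp_rw [hpow]
        rw [one_div s, hs]

section ConeProjection

variable {E : Type*} [NormedAddCommGroup E] [InnerProductSpace ℝ E]

lemma exists_cone_projection [CompleteSpace E] (K : ProperCone ℝ E) (x : E) :
    ∃ y ∈ K, Metric.infDist x K = ‖x - y‖ ∧ ⟪x - y, y⟫ = 0 ∧ ∀ w ∈ K, ⟪x - y, w⟫ ≤ 0 := by
  obtain ⟨y, hyK, hy⟩ := exists_norm_eq_iInf_of_complete_convex K.nonempty
    K.isClosed.isComplete K.convex x
  have hvar := (norm_eq_iInf_iff_real_inner_le_zero K.convex hyK).1 hy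
  have hcone (w : E) (hw : w ∈ K) : ⟪x - y, w⟫ ≤ 0 := by
    simpa using hvar (w + y) (K.add_mem hw hyK)
  refine ⟨y, hyK, ?_, le_antisymm (hcone y hyK) (by simpa using hvar 0 K.zero_mem), hcone⟩
  rw [hy, Metric.infDist_eq_iInf]
  simp only [dist_eq_norm]

variable {S : Submodule ℝ E} [S.HasOrthogonalProjection] {K : Set E}

lemma norm_sub_starProjection_le_infDist (hK : K.Nonempty) (hKS : K ⊆ S) (x : E) :
    ‖x - S.starProjection x‖ ≤ Metric.infDist x K := by
  refine (Metric.le_infDist hK).2 fun {y} hy => ?_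
  rw [S.starProjection_minimal, dist_eq_norm]
  exact ciInf_le ⟨0, Set.forall_mem_range.2 fun _ => norm_nonneg _⟩ (⟨y, hKS hy⟩ : S)

lemma abs_inner_starProjection_le (hK : K.Nonempty) (hKS : K ⊆ S) {x u : E}
    (hxu : ⟪x, u⟫ = 0) :
    |⟪S.starProjection x, S.starProjection u⟫| ≤ Metric.infDist x K * ‖u‖ := by
  have hres : ⟪S.starProjection x, S.starProjection u⟫ = -⟪x - S.starProjection x, u⟫ := by
    rw [← S.inner_starProjection_left_eq_right, S.starProjection_eq_self_iff.2
      (S.starProjection_apply_mem x), inner_sub_left, hxu, zero_sub, neg_neg]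
  rw [hres, abs_neg]
  calc |⟪x - S.starProjection x, u⟫| ≤ ‖x - S.starProjection x‖ * ‖u‖ :=
        abs_real_inner_le_norm _ _
    _ ≤ Metric.infDist x K * ‖u‖ := by
        gcongr
        exact norm_sub_starProjection_le_infDist hK hKS x

end ConeProjection

section AdditiveMatrices

variable {ι κ : Type*}

/-- A matrix as a vector of the Euclidean space `ℝ^(ι × κ)`. -/
noncomputable def vec (x : ι → κ → ℝ) : EuclideanSpace ℝ (ι × κ) :=
  WithLp.toLp 2 fun p => x p.1 p.2

@[simp]
lemma vec_apply (x : ι → κ → ℝ) (p : ι × κ) : vec x p = x p.1 p.2 := rfl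

lemma vec_const_mul (c : ℝ) (x : ι → κ → ℝ) : vec (fun i j => c * x i j) = c • vec x := rfl

variable (ι κ) in
/-- The matrices of the form `(w i + v j)`. -/
def additiveSubspace : Submodule ℝ (EuclideanSpace ℝ (ι × κ)) where
  carrier := {x | ∃ (w : ι → ℝ) (v : κ → ℝ), ∀ p, x p = w p.1 + v p.2}
  zero_mem' := ⟨0, 0, fun p => by simp⟩
  add_mem' := by
    rintro x y ⟨w, v, hx⟩ ⟨w', v', hy⟩
    refine ⟨w + w', v + v', fun p => ?_⟩
    simp only [PiLp.add_apply, Pi.add_apply, hx, hy]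
    ring
  smul_mem' := by
    rintro c x ⟨w, v, hx⟩
    refine ⟨c • w, c • v, fun p => ?_⟩
    simp only [PiLp.smul_apply, Pi.smul_apply, hx, smul_eq_mul]
    ring

variable [Fintype ι] [Fintype κ]

variable (ι κ) in
/-- The entrywise nonnegative additive matrices. For nonempty index types this is the cone
`{w i + v j | w, v ≥ 0}`: subtract the least entry of `w` from `w` and add it to `v`. -/
def additiveCone : ProperCone ℝ (EuclideanSpace ℝ (ι × κ)) where
  carrier := {x | x ∈ additiveSubspace ι κ ∧ ∀ p, 0 ≤ x p}
  zero_mem' := ⟨Submodule.zero_mem _, fun p => by simp⟩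
  add_mem' hx hy := ⟨Submodule.add_mem _ hx.1 hy.1, fun p => add_nonneg (hx.2 p) (hy.2 p)⟩
  smul_mem' c _ hx := ⟨Submodule.smul_mem _ (c : ℝ) hx.1, fun p => mul_nonneg c.2 (hx.2 p)⟩
  isClosed' := by
    have hnonneg : IsClosed {x : EuclideanSpace ℝ (ι × κ) | ∀ p, 0 ≤ x p} := by
      rw [Set.ofPred_forall]
      exact isClosed_iInter fun p => isClosed_le continuous_const (by fun_prop)
    exact (additiveSubspace ι κ).closed_of_finiteDimensional.inter hnonneg

lemma additiveCone_subset :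
    (additiveCone ι κ : Set (EuclideanSpace ℝ (ι × κ))) ⊆ additiveSubspace ι κ := fun _ hx => hx.1

lemma inner_eq_sum_sum (x y : EuclideanSpace ℝ (ι × κ)) :
    ⟪x, y⟫ = ∑ i, ∑ j, x (i, j) * y (i, j) := by
  rw [PiLp.inner_apply, Fintype.sum_prod_type]
  simp only [RCLike.inner_apply, conj_trivial, mul_comm]

lemma norm_vec_sq (x : ι → κ → ℝ) : ‖vec x‖ ^ 2 = ∑ i, ∑ j, x i j ^ 2 := by
  rw [EuclideanSpace.real_norm_sq_eq, Fintype.sum_prod_type]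
  rfl

lemma inner_additive (x y : EuclideanSpace ℝ (ι × κ)) {w : ι → ℝ} {v : κ → ℝ}
    (hy : ∀ p, y p = w p.1 + v p.2) :
    ⟪x, y⟫ = ∑ i, (∑ j, x (i, j)) * w i + ∑ j, (∑ i, x (i, j)) * v j := by
  simp only [inner_eq_sum_sum, hy, mul_add, Finset.sum_add_distrib, Finset.sum_mul]
  rw [Finset.sum_comm (f := fun i j => x (i, j) * v j)]

lemma inner_eq_zero_of_mem_additiveSubspace {x y : EuclideanSpace ℝ (ι × κ)}
    (hrow : ∀ i, ∑ j, x (i, j) = 0) (hcol : ∀ j, ∑ i, x (i, j) = 0)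
    (hy : y ∈ additiveSubspace ι κ) : ⟪x, y⟫ = 0 := by
  obtain ⟨w, v, hwv⟩ := hy
  simp [inner_additive x y hwv, hrow, hcol]

lemma row_sum_nonpos_of_polar {x : EuclideanSpace ℝ (ι × κ)}
    (hx : ∀ y ∈ additiveCone ι κ, ⟪x, y⟫ ≤ 0) (i : ι) : ∑ j, x (i, j) ≤ 0 := by
  classical
  have hadd : ∀ p, vec (fun i' (_ : κ) => (Pi.single i 1 : ι → ℝ) i') p =
      (Pi.single i 1 : ι → ℝ) p.1 + (0 : κ → ℝ) p.2 := fun p => by simp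
  have hmem := hx _ ⟨⟨_, _, hadd⟩, fun p => by
    simp only [vec_apply, Pi.single_apply]
    split_ifs <;> norm_num⟩
  rw [inner_additive x _ hadd] at hmem
  simpa [Pi.single_apply] using hmem

lemma col_sum_nonpos_of_polar {x : EuclideanSpace ℝ (ι × κ)}
    (hx : ∀ y ∈ additiveCone ι κ, ⟪x, y⟫ ≤ 0) (j : κ) : ∑ i, x (i, j) ≤ 0 := by
  classical
  have hadd : ∀ p, vec (fun (_ : ι) j' => (Pi.single j 1 : κ → ℝ) j') p =
      (0 : ι → ℝ) p.1 + (Pi.single j 1 : κ → ℝ) p.2 := fun p => by simp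
  have hmem := hx _ ⟨⟨_, _, hadd⟩, fun p => by
    simp only [vec_apply, Pi.single_apply]
    split_ifs <;> norm_num⟩
  rw [inner_additive x _ hadd] at hmem
  simpa [Pi.single_apply] using hmem

lemma starProjection_additiveSubspace_apply [Nonempty ι] [Nonempty κ]
    (x : EuclideanSpace ℝ (ι × κ)) (i : ι) (j : κ) :
    (additiveSubspace ι κ).starProjection x (i, j) =
      (∑ j', x (i, j')) / Fintype.card κ + (∑ i', x (i', j)) / Fintype.card ι -
        (∑ i', ∑ j', x (i', j')) / (Fintype.card ι * Fintype.card κ) := by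
  set T := ∑ i', ∑ j', x (i', j') with hT
  have hT' : ∑ j', ∑ i', x (i', j') = T := Finset.sum_comm
  set y : EuclideanSpace ℝ (ι × κ) := vec fun i j =>
    (∑ j', x (i, j')) / Fintype.card κ + (∑ i', x (i', j)) / Fintype.card ι -
      T / (Fintype.card ι * Fintype.card κ) with hy
  have hmem : y ∈ additiveSubspace ι κ :=
    ⟨fun i => (∑ j', x (i, j')) / Fintype.card κ, fun j => (∑ i', x (i', j)) / Fintype.card ι -
      T / (Fintype.card ι * Fintype.card κ), fun p => by simp [hy, add_sub_assoc]⟩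
  have hι : (Fintype.card ι : ℝ) ≠ 0 := mod_cast Fintype.card_ne_zero
  have hκ : (Fintype.card κ : ℝ) ≠ 0 := mod_cast Fintype.card_ne_zero
  have hrow (i : ι) : ∑ j, (x - y) (i, j) = 0 := by
    simp only [PiLp.sub_apply, hy, vec_apply, Finset.sum_sub_distrib, Finset.sum_add_distrib,
      Finset.sum_const, Finset.card_univ, nsmul_eq_mul, ← Finset.sum_div, hT']
    field_simp
    ring
  have hcol (j : κ) : ∑ i, (x - y) (i, j) = 0 := by
    simp only [PiLp.sub_apply, hy, vec_apply, Finset.sum_sub_distrib, Finset.sum_add_distrib,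
      Finset.sum_const, Finset.card_univ, nsmul_eq_mul, ← Finset.sum_div, ← hT]
    field_simp
    ring
  rw [Submodule.eq_starProjection_of_mem_of_inner_eq_zero hmem fun w hw =>
    inner_eq_zero_of_mem_additiveSubspace hrow hcol hw]
  simp [hy]

lemma norm_starProjection_sq_eq [Nonempty ι] [Nonempty κ] (x : EuclideanSpace ℝ (ι × κ)) :
    ‖(additiveSubspace ι κ).starProjection x‖ ^ 2 =
      (∑ i, (∑ j, x (i, j)) ^ 2) / Fintype.card κ + (∑ j, (∑ i, x (i, j)) ^ 2) / Fintype.card ι -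
        (∑ i, ∑ j, x (i, j)) ^ 2 / (Fintype.card ι * Fintype.card κ) := by
  have hadd (p : ι × κ) : (additiveSubspace ι κ).starProjection x p =
      (∑ j, x (p.1, j)) / Fintype.card κ + ((∑ i, x (i, p.2)) / Fintype.card ι -
        (∑ i, ∑ j, x (i, j)) / (Fintype.card ι * Fintype.card κ)) := by
    rw [starProjection_additiveSubspace_apply, add_sub_assoc]
  rw [← real_inner_self_eq_norm_sq, Submodule.inner_starProjection_left_eq_right,
    Submodule.starProjection_eq_self_iff.2 (Submodule.starProjection_apply_mem _ _),
    inner_additive x _ (w := fun i => (∑ j, x (i, j)) / Fintype.card κ)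
      (v := fun j => (∑ i, x (i, j)) / Fintype.card ι -
        (∑ i, ∑ j, x (i, j)) / (Fintype.card ι * Fintype.card κ)) hadd]
  simp only [mul_sub, ← mul_div_assoc, ← sq, Finset.sum_sub_distrib, ← Finset.sum_div,
    ← Finset.sum_mul]
  rw [Finset.sum_comm (f := fun j i => x (i, j)), ← sq]
  ring

lemma norm_starProjection_single_sq [Nonempty ι] [Nonempty κ] [DecidableEq (ι × κ)] (p : ι × κ) :
    ‖(additiveSubspace ι κ).starProjection (EuclideanSpace.single p 1)‖ ^ 2 =
      1 / Fintype.card κ + 1 / Fintype.card ι - 1 / (Fintype.card ι * Fintype.card κ) := by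
  classical
  have hentry (i : ι) (j : κ) : (EuclideanSpace.single p (1 : ℝ)) (i, j) =
      if i = p.1 then (if j = p.2 then 1 else 0) else 0 := by
    rw [PiLp.single_apply, ← ite_and]
    exact if_congr Prod.ext_iff rfl rfl
  simp only [norm_starProjection_sq_eq, hentry]
  simp

lemma norm_starProjection_sq_le [Nonempty ι] [Nonempty κ] {x : EuclideanSpace ℝ (ι × κ)}
    (hx : ∀ p, 0 ≤ x p) (hrow : ∀ i, ∑ j, x (i, j) ≤ 1) (hcol : ∀ j, ∑ i, x (i, j) ≤ 1) :
    ‖(additiveSubspace ι κ).starProjection x‖ ^ 2 ≤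
      (1 / Fintype.card κ + 1 / Fintype.card ι) * ∑ i, ∑ j, x (i, j) := by
  have hrow_sq : ∑ i, (∑ j, x (i, j)) ^ 2 ≤ ∑ i, ∑ j, x (i, j) :=
    Finset.sum_le_sum fun i _ =>
      pow_le_of_le_one (Finset.sum_nonneg fun j _ => hx _) (hrow i) two_ne_zero
  have hcol_sq : ∑ j, (∑ i, x (i, j)) ^ 2 ≤ ∑ i, ∑ j, x (i, j) := by
    rw [Finset.sum_comm]
    exact Finset.sum_le_sum fun j _ =>
      pow_le_of_le_one (Finset.sum_nonneg fun i _ => hx _) (hcol j) two_ne_zero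
  rw [norm_starProjection_sq_eq]
  calc (∑ i, (∑ j, x (i, j)) ^ 2) / Fintype.card κ + (∑ j, (∑ i, x (i, j)) ^ 2) / Fintype.card ι -
        (∑ i, ∑ j, x (i, j)) ^ 2 / (Fintype.card ι * Fintype.card κ)
      ≤ (∑ i, (∑ j, x (i, j)) ^ 2) / Fintype.card κ +
          (∑ j, (∑ i, x (i, j)) ^ 2) / Fintype.card ι := sub_le_self _ (by positivity)
    _ ≤ (∑ i, ∑ j, x (i, j)) / Fintype.card κ + (∑ i, ∑ j, x (i, j)) / Fintype.card ι := by
        gcongr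
    _ = (1 / Fintype.card κ + 1 / Fintype.card ι) * ∑ i, ∑ j, x (i, j) := by ring

end AdditiveMatrices

section Birkhoff

variable {ι : Type*} [Fintype ι] [DecidableEq ι]

lemma exists_mem_doublyStochastic_ge {M : Matrix ι ι ℝ} (hM : ∀ i j, 0 ≤ M i j)
    (hrow : ∀ i, ∑ j, M i j ≤ 1) (hcol : ∀ j, ∑ i, M i j ≤ 1) :
    ∃ N ∈ doublyStochastic ℝ ι, ∀ i j, M i j ≤ N i j := by
  set R : ι → ℝ := fun i => 1 - ∑ j, M i j with hR
  set C : ι → ℝ := fun j => 1 - ∑ i, M i j with hC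
  have hR0 (i : ι) : 0 ≤ R i := sub_nonneg.2 (hrow i)
  have hC0 (j : ι) : 0 ≤ C j := sub_nonneg.2 (hcol j)
  have hCR : ∑ j, C j = ∑ i, R i := by
    simp only [hR, hC, Finset.sum_sub_distrib]
    rw [Finset.sum_comm]
  have hcorr0 (i j : ι) : 0 ≤ R i * C j / ∑ k, R k :=
    div_nonneg (mul_nonneg (hR0 i) (hC0 j)) (Finset.sum_nonneg fun k _ => hR0 k)
  -- If the total deficit `∑ k, R k` vanishes then so does each `R i` and `C j`, and `0 / 0 = 0`.
  have hdiv {c : ℝ} (hc0 : 0 ≤ c) (hc : c ≤ ∑ k, R k) : c * (∑ k, R k) / ∑ k, R k = c := by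
    rcases eq_or_ne (∑ k, R k) 0 with h | h
    · rw [h, div_zero]
      exact hc0.antisymm (h ▸ hc)
    · exact mul_div_cancel_right₀ c h
  refine ⟨Matrix.of fun i j => M i j + R i * C j / ∑ k, R k, ?_, fun i j => ?_⟩
  · refine mem_doublyStochastic_iff_sum.2
      ⟨fun i j => add_nonneg (hM i j) (hcorr0 i j), fun i => ?_, fun j => ?_⟩
    · simp only [Matrix.of_apply, Finset.sum_add_distrib, ← Finset.sum_div, ← Finset.mul_sum, hCR]
      rw [hdiv (hR0 i) (Finset.single_le_sum (fun k _ => hR0 k) (Finset.mem_univ i))]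
      exact add_sub_cancel _ _
    · simp only [Matrix.of_apply, Finset.sum_add_distrib, ← Finset.sum_div, ← Finset.sum_mul]
      rw [mul_comm, hdiv (hC0 j)
        (hCR ▸ Finset.single_le_sum (fun k _ => hC0 k) (Finset.mem_univ j))]
      exact add_sub_cancel _ _
  · exact le_add_of_nonneg_right (hcorr0 i j)

lemma exists_perm_sum_mul_le (c : ι → ι → ℝ) {M : Matrix ι ι ℝ} (hM : M ∈ doublyStochastic ℝ ι) :
    ∃ τ : Equiv.Perm ι, ∑ i, ∑ j, c i j * M i j ≤ ∑ i, c i (τ i) := by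
  rw [← SetLike.mem_coe, doublyStochastic_eq_convexHull_permMatrix] at hM
  let f : Matrix ι ι ℝ →ₗ[ℝ] ℝ := ∑ i, ∑ j, c i j • Matrix.entryLinearMap ℝ ℝ i j
  obtain ⟨_, ⟨τ, rfl⟩, hτ⟩ :=
    (f.convexOn convex_univ).exists_ge_of_mem_convexHull (Set.subset_univ _) hM
  refine ⟨τ, ?_⟩
  simpa [f, LinearMap.sum_apply, Equiv.Perm.permMatrix, PEquiv.toMatrix_apply,
    Equiv.toPEquiv_apply] using hτ

end Birkhoff

section Schedules

variable {n : ℕ}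

lemma isPerm_ite (τ : Equiv.Perm (Fin n)) : IsPerm n fun i j => if τ i = j then 1 else 0 := by
  refine ⟨fun i j => ?_, fun i => by simp, fun j => by simp [← τ.eq_symm_apply]⟩
  dsimp only
  split_ifs <;> simp

/-- A queue, arrival or schedule matrix as a vector of the Euclidean space `ℝ^(n × n)`. -/
noncomputable def natVec (q : Fin n → Fin n → ℕ) : EuclideanSpace ℝ (Fin n × Fin n) :=
  vec (toR n q)

@[simp]
lemma natVec_apply (q : Fin n → Fin n → ℕ) (p : Fin n × Fin n) : natVec q p = q p.1 p.2 := rfl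

lemma natVec_nonneg (q : Fin n → Fin n → ℕ) (p : Fin n × Fin n) : 0 ≤ natVec q p :=
  Nat.cast_nonneg _

lemma IsPerm.sum_natVec_row {s : Fin n → Fin n → ℕ} (hs : IsPerm n s) (i : Fin n) :
    ∑ j, natVec s (i, j) = 1 := by
  simpa using congrArg (Nat.cast (R := ℝ)) (hs.2.1 i)

lemma IsPerm.sum_natVec_col {s : Fin n → Fin n → ℕ} (hs : IsPerm n s) (j : Fin n) :
    ∑ i, natVec s (i, j) = 1 := by
  simpa using congrArg (Nat.cast (R := ℝ)) (hs.2.2 j)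

lemma IsMaxWeight.inner_le_inner_sched {sched : (Fin n → Fin n → ℕ) → Fin n → Fin n → ℕ}
    (hsched : IsMaxWeight n sched) (q : Fin n → Fin n → ℕ) {x : EuclideanSpace ℝ (Fin n × Fin n)}
    (hx : ∀ p, 0 ≤ x p) (hrow : ∀ i, ∑ j, x (i, j) ≤ 1) (hcol : ∀ j, ∑ i, x (i, j) ≤ 1) :
    ⟪natVec q, x⟫ ≤ ⟪natVec q, natVec (sched q)⟫ := by
  obtain ⟨N, hN, hxN⟩ := exists_mem_doublyStochastic_ge (M := Matrix.of fun i j => x (i, j))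
    (fun i j => hx (i, j)) hrow hcol
  obtain ⟨τ, hτ⟩ := exists_perm_sum_mul_le (fun i j => (q i j : ℝ)) hN
  have hmax : ∑ i, (q i (τ i) : ℝ) ≤ ∑ i, ∑ j, (q i j : ℝ) * sched q i j := by
    have h := (hsched q).2 _ (isPerm_ite τ)
    simp only [mul_ite, mul_one, mul_zero, Finset.sum_ite_eq, Finset.mem_univ, if_true] at h
    exact mod_cast h
  simp only [inner_eq_sum_sum, natVec_apply]
  calc ∑ i, ∑ j, (q i j : ℝ) * x (i, j) ≤ ∑ i, ∑ j, (q i j : ℝ) * N i j := by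
        gcongr with i _ j _
        exact hxN i j
    _ ≤ ∑ i, ∑ j, (q i j : ℝ) * sched q i j := hτ.trans hmax

lemma IsMaxWeight.mul_inner_le_norm_mul_inner {sched : (Fin n → Fin n → ℕ) → Fin n → Fin n → ℕ}
    (hsched : IsMaxWeight n sched) {ν : Fin n → Fin n → ℝ} (hν : memF n ν) {νmin : ℝ}
    (hmin0 : 0 ≤ νmin) (hmin : ∀ i j, νmin ≤ ν i j) (q : Fin n → Fin n → ℕ)
    {z : EuclideanSpace ℝ (Fin n × Fin n)} (hrow : ∀ i, ∑ j, z (i, j) ≤ 0)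
    (hcol : ∀ j, ∑ i, z (i, j) ≤ 0) :
    νmin * ⟪natVec q, z⟫ ≤ ‖z‖ * ⟪natVec q, natVec (sched q) - vec ν⟫ := by
  rcases eq_or_ne z 0 with rfl | hz
  · simp
  have hz0 : 0 < ‖z‖ := norm_pos_iff.2 hz
  have ht0 : 0 ≤ νmin / ‖z‖ := by positivity
  have hle := hsched.inner_le_inner_sched q (x := vec ν + (νmin / ‖z‖) • z) (fun p => ?_)
    (fun i => ?_) (fun j => ?_)
  · rw [inner_add_right, inner_smul_right, div_mul_eq_mul_div] at hle
    rw [inner_sub_right, ← div_le_iff₀' hz0]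
    linarith
  · have hzp : -‖z‖ ≤ z p := (abs_le.1 (PiLp.norm_apply_le z p)).1
    calc (0 : ℝ) ≤ ν p.1 p.2 - νmin := sub_nonneg.2 (hmin _ _)
      _ = ν p.1 p.2 + νmin / ‖z‖ * -‖z‖ := by field_simp; ring
      _ ≤ ν p.1 p.2 + νmin / ‖z‖ * z p := by gcongr
  · simp only [PiLp.add_apply, PiLp.smul_apply, vec_apply, smul_eq_mul, Finset.sum_add_distrib,
      ← Finset.mul_sum, hν.2.1]
    linarith [mul_nonpos_of_nonneg_of_nonpos ht0 (hrow i)]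
  · simp only [PiLp.add_apply, PiLp.smul_apply, vec_apply, smul_eq_mul, Finset.sum_add_distrib,
      ← Finset.mul_sum, hν.2.2]
    linarith [mul_nonpos_of_nonneg_of_nonpos ht0 (hcol j)]

lemma inner_sub_natVec_eq_zero {ν : Fin n → Fin n → ℝ} (hν : memF n ν)
    {s : Fin n → Fin n → ℕ} (hs : IsPerm n s) {y : EuclideanSpace ℝ (Fin n × Fin n)}
    (hy : y ∈ additiveSubspace (Fin n) (Fin n)) : ⟪natVec s - vec ν, y⟫ = 0 := by
  refine inner_eq_zero_of_mem_additiveSubspace (fun i => ?_) (fun j => ?_) hy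
  · simp only [PiLp.sub_apply, Finset.sum_sub_distrib, hs.sum_natVec_row, vec_apply, hν.2.1,
      sub_self]
  · simp only [PiLp.sub_apply, Finset.sum_sub_distrib, hs.sum_natVec_col, vec_apply, hν.2.2,
      sub_self]

lemma norm_natVec_le_sum (q : Fin n → Fin n → ℕ) : ‖natVec q‖ ≤ ∑ p, natVec q p := by
  refine (sq_le_sq₀ (norm_nonneg _) (Finset.sum_nonneg fun p _ => natVec_nonneg q p)).1 ?_
  rw [EuclideanSpace.real_norm_sq_eq]
  exact Finset.sum_sq_le_sq_sum_of_nonneg fun p _ => natVec_nonneg q p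

variable {sched : (Fin n → Fin n → ℕ) → Fin n → Fin n → ℕ} {ν : Fin n → Fin n → ℝ} {νmin ε : ℝ}

lemma IsMaxWeight.inner_drift_le (hsched : IsMaxWeight n sched) (hν : memF n ν)
    (hmin : ∀ i j, νmin ≤ ν i j) (hε : 0 ≤ ε) (q : Fin n → Fin n → ℕ) :
    ⟪natVec q, (1 - ε) • vec ν - natVec (sched q)⟫ ≤ -(ε * νmin * ∑ p, natVec q p) := by
  have hmax : ⟪natVec q, vec ν⟫ ≤ ⟪natVec q, natVec (sched q)⟫ :=
    hsched.inner_le_inner_sched q (fun p => hν.1 _ _) (fun i => (hν.2.1 i).le)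
      (fun j => (hν.2.2 j).le)
  have hlower : νmin * ∑ p, natVec q p ≤ ⟪natVec q, vec ν⟫ := by
    rw [PiLp.inner_apply, Finset.mul_sum]
    exact Finset.sum_le_sum fun p _ =>
      mul_le_mul_of_nonneg_right (hmin p.1 p.2) (natVec_nonneg q p)
  rw [inner_sub_right, inner_smul_right]
  linarith [mul_le_mul_of_nonneg_left hlower hε]

lemma IsMaxWeight.inner_collapse_drift_le (hsched : IsMaxWeight n sched) (hν : memF n ν)
    (hmin0 : 0 ≤ νmin) (hmin : ∀ i j, νmin ≤ ν i j) (hε0 : 0 ≤ ε)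
    (hε : ε * ‖vec ν‖ ≤ νmin / 2) (q : Fin n → Fin n → ℕ)
    {y : EuclideanSpace ℝ (Fin n × Fin n)} (hy : y ∈ additiveCone (Fin n) (Fin n))
    (horth : ⟪natVec q - y, y⟫ = 0)
    (hpolar : ∀ w ∈ additiveCone (Fin n) (Fin n), ⟪natVec q - y, w⟫ ≤ 0) :
    ⟪natVec q - y, (1 - ε) • vec ν - natVec (sched q)⟫ ≤ -(νmin / 2 * ‖natVec q - y‖) := by
  set z := natVec q - y with hz
  have hqz : ⟪natVec q, z⟫ = ‖z‖ ^ 2 := by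
    rw [← real_inner_self_eq_norm_sq, ← sub_add_cancel (natVec q) y, ← hz, inner_add_left,
      real_inner_comm z y, horth, add_zero]
  have hqs : ⟪natVec q, natVec (sched q) - vec ν⟫ = ⟪z, natVec (sched q) - vec ν⟫ := by
    rw [hz, inner_sub_left, real_inner_comm _ y,
      inner_sub_natVec_eq_zero hν (hsched q).1 hy.1, sub_zero]
  have hweight : νmin * ‖z‖ ≤ ⟪z, natVec (sched q) - vec ν⟫ := by
    have hle := hsched.mul_inner_le_norm_mul_inner hν hmin0 hmin q
      (row_sum_nonpos_of_polar hpolar) (col_sum_nonpos_of_polar hpolar)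
    rw [hqz, hqs] at hle
    rcases (norm_nonneg z).eq_or_lt with h0 | hpos
    · simp [norm_eq_zero.1 h0.symm]
    · exact le_of_mul_le_mul_left (by linarith) hpos
  have hload : -⟪z, vec ν⟫ ≤ ‖z‖ * ‖vec ν‖ :=
    (neg_le_abs _).trans (abs_real_inner_le_norm _ _)
  rw [inner_sub_right] at hweight
  rw [inner_sub_right, inner_smul_right]
  linarith [mul_le_mul_of_nonneg_left hload hε0,
    mul_le_mul_of_nonneg_right hε (norm_nonneg z)]

end Schedules

section UnusedService

variable {n : ℕ}

/-- The service offered to empty queues, `u = q⁺ - (q + a - s)`. -/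
noncomputable def unusedService (q a s : Fin n → Fin n → ℕ) : EuclideanSpace ℝ (Fin n × Fin n) :=
  natVec (nextQ n q a s) - (natVec q + (natVec a - natVec s))

variable {q a s : Fin n → Fin n → ℕ}

lemma unusedService_apply (hs : ∀ i j, s i j ≤ 1) (p : Fin n × Fin n) :
    unusedService q a s p = if q p.1 p.2 + a p.1 p.2 < s p.1 p.2 then 1 else 0 := by
  simp only [unusedService, nextQ, PiLp.sub_apply, PiLp.add_apply, natVec_apply]
  split_ifs with h
  · have hs1 : s p.1 p.2 = 1 := by have := hs p.1 p.2; omega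
    have hq : q p.1 p.2 = 0 := by omega
    have ha : a p.1 p.2 = 0 := by omega
    simp [hs1, hq, ha]
  · rw [Nat.cast_sub (not_lt.1 h)]
    push_cast
    ring

lemma unusedService_nonneg (hs : ∀ i j, s i j ≤ 1) (p : Fin n × Fin n) :
    0 ≤ unusedService q a s p := by
  rw [unusedService_apply hs]
  split_ifs <;> simp

lemma unusedService_le (hs : ∀ i j, s i j ≤ 1) (p : Fin n × Fin n) :
    unusedService q a s p ≤ natVec s p := by
  rw [unusedService_apply hs, natVec_apply]
  split_ifs with h
  · exact Nat.one_le_cast.2 (Nat.one_le_of_lt h)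
  · exact Nat.cast_nonneg _

lemma norm_unusedService_sq (hs : ∀ i j, s i j ≤ 1) :
    ‖unusedService q a s‖ ^ 2 = ∑ p, unusedService q a s p := by
  rw [EuclideanSpace.real_norm_sq_eq]
  refine Finset.sum_congr rfl fun p _ => ?_
  rw [unusedService_apply hs]
  split_ifs <;> simp

lemma sum_unusedService_eq_zero_or_one_le (hs : ∀ i j, s i j ≤ 1) :
    ∑ p, unusedService q a s p = 0 ∨ 1 ≤ ∑ p, unusedService q a s p := by
  simp only [unusedService_apply hs, Finset.sum_boole]
  exact_mod_cast Nat.eq_zero_or_pos _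

lemma inner_nextQ_unusedService (hs : ∀ i j, s i j ≤ 1) :
    ⟪natVec (nextQ n q a s), unusedService q a s⟫ = 0 := by
  rw [PiLp.inner_apply]
  refine Finset.sum_eq_zero fun p _ => ?_
  rw [unusedService_apply hs]
  split_ifs with h
  · simp [nextQ, Nat.sub_eq_zero_of_le h.le]
  · simp

lemma sum_unusedService (hs : IsPerm n s) :
    ∑ p, unusedService q a s p =
      ∑ p, natVec (nextQ n q a s) p - ∑ p, natVec q p - ∑ p, natVec a p + n := by
  have hs_sum : ∑ p, natVec s p = n := by
    simp [Fintype.sum_prod_type, -natVec_apply, hs.sum_natVec_row]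
  simp only [unusedService, PiLp.sub_apply, PiLp.add_apply, Finset.sum_sub_distrib,
    Finset.sum_add_distrib, hs_sum]
  ring

lemma IsPerm.norm_natVec_sq (hs : IsPerm n s) : ‖natVec s‖ ^ 2 = n := by
  have hsq (p : Fin n × Fin n) : natVec s p ^ 2 = natVec s p := by
    rcases Nat.le_one_iff_eq_zero_or_eq_one.1 (hs.1 p.1 p.2) with h | h <;> simp [h]
  rw [EuclideanSpace.real_norm_sq_eq]
  simp [hsq, Fintype.sum_prod_type, -natVec_apply, hs.sum_natVec_row]

lemma norm_starProjection_unusedService_sq_le [NeZero n] (hs : IsPerm n s) :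
    ‖(additiveSubspace (Fin n) (Fin n)).starProjection (unusedService q a s)‖ ^ 2 ≤
      2 / n * ∑ p, unusedService q a s p := by
  have hrow (i : Fin n) : ∑ j, unusedService q a s (i, j) ≤ 1 :=
    (Finset.sum_le_sum fun j _ => unusedService_le hs.1 (i, j)).trans (hs.sum_natVec_row i).le
  have hcol (j : Fin n) : ∑ i, unusedService q a s (i, j) ≤ 1 :=
    (Finset.sum_le_sum fun i _ => unusedService_le hs.1 (i, j)).trans (hs.sum_natVec_col j).le
  have hle := norm_starProjection_sq_le (unusedService_nonneg hs.1) hrow hcol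
  rw [Fintype.card_fin, ← add_div, one_add_one_eq_two] at hle
  rwa [Fintype.sum_prod_type]

lemma norm_natVec_nextQ_sub_le {y : EuclideanSpace ℝ (Fin n × Fin n)} (hy : ∀ p, 0 ≤ y p) :
    ‖natVec (nextQ n q a s) - y‖ ≤ ‖natVec a + (natVec q - y - natVec s)‖ := by
  rw [EuclideanSpace.norm_eq, EuclideanSpace.norm_eq]
  refine Real.sqrt_le_sqrt (Finset.sum_le_sum fun p _ => pow_le_pow_left₀ (norm_nonneg _) ?_ 2)
  have hnext : natVec (nextQ n q a s) p = max (natVec q p + natVec a p - natVec s p) 0 := by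
    simp only [natVec_apply, nextQ]
    rcases le_total (q p.1 p.2 + a p.1 p.2) (s p.1 p.2) with h | h
    · rw [Nat.sub_eq_zero_of_le h, Nat.cast_zero, max_eq_right (sub_nonpos.2 (mod_cast h))]
    · rw [Nat.cast_sub h, Nat.cast_add, max_eq_left (sub_nonneg.2 (mod_cast h))]
  calc ‖natVec (nextQ n q a s) p - y p‖
      = |max (natVec q p + natVec a p - natVec s p) 0 - max (y p) 0| := by
        rw [hnext, max_eq_left (hy p), Real.norm_eq_abs]
    _ ≤ |natVec q p + natVec a p - natVec s p - y p| := abs_max_sub_max_le_abs _ _ _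
    _ = ‖(natVec a + (natVec q - y - natVec s)) p‖ := by
        simp only [PiLp.add_apply, PiLp.sub_apply, Real.norm_eq_abs]
        congr 1
        ring

lemma norm_natVec_nextQ_sub_natVec_le {amax : ℕ} (hs : ∀ i j, s i j ≤ 1) (hamax : 1 ≤ amax)
    (ha : ∀ i j, a i j ≤ amax) : ‖natVec (nextQ n q a s) - natVec q‖ ≤ n * amax := by
  have hentry (p : Fin n × Fin n) : |(natVec (nextQ n q a s) - natVec q) p| ≤ amax := by
    have hup : nextQ n q a s p.1 p.2 ≤ q p.1 p.2 + amax := by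
      have := ha p.1 p.2
      simp only [nextQ]
      omega
    have hlow : q p.1 p.2 ≤ nextQ n q a s p.1 p.2 + amax := by
      have := hs p.1 p.2
      simp only [nextQ]
      omega
    have hup' : (nextQ n q a s p.1 p.2 : ℝ) ≤ q p.1 p.2 + amax := mod_cast hup
    have hlow' : (q p.1 p.2 : ℝ) ≤ nextQ n q a s p.1 p.2 + amax := mod_cast hlow
    exact abs_le.2 ⟨neg_le_sub_iff_le_add.2 hlow', sub_le_iff_le_add'.2 hup'⟩
  refine (sq_le_sq₀ (norm_nonneg _) (by positivity)).1 ?_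
  calc ‖natVec (nextQ n q a s) - natVec q‖ ^ 2
      = ∑ p, (natVec (nextQ n q a s) - natVec q) p ^ 2 := EuclideanSpace.real_norm_sq_eq _
    _ ≤ ∑ _p : Fin n × Fin n, (amax : ℝ) ^ 2 :=
        Finset.sum_le_sum fun p _ => sq_le_sq.2 ((hentry p).trans (le_abs_self _))
    _ = (n * amax : ℝ) ^ 2 := by simp; ring

end UnusedService

section Drift

variable {n amax : ℕ} {sched : (Fin n → Fin n → ℕ) → Fin n → Fin n → ℕ}
  {π α : Measure (Fin n → Fin n → ℕ)} {m σ : EuclideanSpace ℝ (Fin n × Fin n)}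

lemma integral_infDist_nextQ_sq_le [IsProbabilityMeasure α]
    (hα : HasUncorrelatedCoords α natVec m σ) {s : Fin n → Fin n → ℕ} (hs : IsPerm n s)
    (q : Fin n → Fin n → ℕ) {K : Set (EuclideanSpace ℝ (Fin n × Fin n))}
    {y : EuclideanSpace ℝ (Fin n × Fin n)} (hyK : y ∈ K) (hy : ∀ p, 0 ≤ y p) :
    ∫ a, Metric.infDist (natVec (nextQ n q a s)) K ^ 2 ∂α ≤
      ‖natVec q - y‖ ^ 2 + 2 * ⟪natVec q - y, m - natVec s⟫ + (‖m‖ ^ 2 + ‖σ‖ ^ 2 + n) := by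
  have hint : Integrable (fun a => ‖natVec a + (natVec q - y - natVec s)‖ ^ 2) α :=
    (hα.memLp.add (memLp_const _)).integrable_norm_pow two_ne_zero
  have hms : 0 ≤ ⟪m, natVec s⟫ := by
    rw [PiLp.inner_apply]
    refine Finset.sum_nonneg fun p _ => mul_nonneg (natVec_nonneg s p) ?_
    rw [← hα.integral_apply p]
    exact integral_nonneg fun a => natVec_nonneg a p
  have hdist (a : Fin n → Fin n → ℕ) : Metric.infDist (natVec (nextQ n q a s)) K ≤
      ‖natVec a + (natVec q - y - natVec s)‖ :=
    (Metric.infDist_le_dist_of_mem hyK).trans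
      ((dist_eq_norm _ _).trans_le (norm_natVec_nextQ_sub_le hy))
  calc ∫ a, Metric.infDist (natVec (nextQ n q a s)) K ^ 2 ∂α
      ≤ ∫ a, ‖natVec a + (natVec q - y - natVec s)‖ ^ 2 ∂α :=
        integral_mono_of_nonneg (ae_of_all _ fun _ => by positivity) hint
          (ae_of_all _ fun a => pow_le_pow_left₀ Metric.infDist_nonneg (hdist a) 2)
    _ = ‖σ‖ ^ 2 + ‖natVec q - y + (m - natVec s)‖ ^ 2 := by
        have h := hα.integral_norm_sq_map_add (.id ℝ _) (natVec q - y - natVec s)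
        simp only [ContinuousLinearMap.id_apply, PiLp.norm_single, norm_one, one_pow,
          mul_one, ← EuclideanSpace.real_norm_sq_eq] at h
        rw [h, add_sub_left_comm m]
    _ ≤ ‖natVec q - y‖ ^ 2 + 2 * ⟪natVec q - y, m - natVec s⟫ + (‖m‖ ^ 2 + ‖σ‖ ^ 2 + n) := by
        rw [norm_add_sq_real, norm_sub_sq_real m, hs.norm_natVec_sq]
        linarith

/-- One slot of the switch: the next state, given the current state and the arrivals. -/
def step (sched : (Fin n → Fin n → ℕ) → Fin n → Fin n → ℕ)
    (p : (Fin n → Fin n → ℕ) × (Fin n → Fin n → ℕ)) : Fin n → Fin n → ℕ :=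
  nextQ n p.1 p.2 (sched p.1)

/-- The MaxWeight switch in steady state, with queue law `π` and arrival law `α`: arrivals are
bounded, uncorrelated between entries, have means `m` and variances `σ ^ 2`, and are drawn
independently of the queues. -/
structure IsStationarySwitch (sched : (Fin n → Fin n → ℕ) → Fin n → Fin n → ℕ)
    (π α : Measure (Fin n → Fin n → ℕ)) (m σ : EuclideanSpace ℝ (Fin n × Fin n))
    (amax : ℕ) : Prop where
  isMaxWeight : IsMaxWeight n sched
  arrival : HasUncorrelatedCoords α natVec m σ
  arrival_le : ∀ᵐ a ∂α, ∀ i j, a i j ≤ amax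
  one_le : 1 ≤ amax
  measurePreserving : MeasurePreserving (step sched) (π.prod α) π

namespace IsStationarySwitch

lemma abs_infDist_step_sub_le (h : IsStationarySwitch sched π α m σ amax)
    (K : Set (EuclideanSpace ℝ (Fin n × Fin n))) (q : Fin n → Fin n → ℕ) :
    ∀ᵐ a ∂α, |Metric.infDist (natVec (step sched (q, a))) K - Metric.infDist (natVec q) K| ≤
      n * amax := by
  filter_upwards [h.arrival_le] with a ha
  refine ((Metric.lipschitz_infDist_pt K).dist_le_mul _ _).trans ?_
  rw [NNReal.coe_one, one_mul, dist_eq_norm]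
  exact norm_natVec_nextQ_sub_natVec_le (h.isMaxWeight q).1.1 h.one_le ha

variable [IsProbabilityMeasure π] [IsProbabilityMeasure α]

lemma isStationaryDriftPair_infDist (h : IsStationarySwitch sched π α m σ amax)
    {K : Set (EuclideanSpace ℝ (Fin n × Fin n))} {κ : ℝ} (hκ : 0 < κ)
    (hK : ∀ q, ∃ y ∈ K, (∀ p, 0 ≤ y p) ∧ Metric.infDist (natVec q) K = ‖natVec q - y‖ ∧
      ⟪natVec q - y, m - natVec (sched q)⟫ ≤ -(κ / 2 * ‖natVec q - y‖)) :
    IsStationaryDriftPair (π.prod α) (fun p => Metric.infDist (natVec p.1) K)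
      (fun p => Metric.infDist (natVec (step sched p)) K) (n * amax) (κ / 4)
      (4 * (‖m‖ ^ 2 + ‖σ‖ ^ 2 + n) / κ) := by
  refine isStationaryDriftPair_of_measurePreserving (V := fun q => Metric.infDist (natVec q) K)
    h.measurePreserving .of_discrete ?_ fun q hq => ?_
  · exact Measure.ae_prod_iff_ae_ae (MeasurableSet.of_discrete) |>.2
      (ae_of_all _ fun q => h.abs_infDist_step_sub_le K q)
  · obtain ⟨y, hyK, hy0, hdist, hdrift⟩ := hK q
    have hmemLp : MemLp (fun a => Metric.infDist (natVec (step sched (q, a))) K) 2 α := by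
      refine .of_bound Measurable.of_discrete.aestronglyMeasurable
        (n * amax + Metric.infDist (natVec q) K) ?_
      filter_upwards [h.abs_infDist_step_sub_le K q] with a ha
      rw [Real.norm_eq_abs, abs_of_nonneg Metric.infDist_nonneg]
      linarith [(abs_le.1 ha).2]
    refine integral_sub_le_of_integral_sq_le hmemLp (by positivity) hκ hq ?_
    refine (integral_infDist_nextQ_sq_le h.arrival (h.isMaxWeight q).1 q hyK
      hy0).trans ?_
    rw [hdist]
    linarith

variable {ν : Fin n → Fin n → ℝ} {νmin ε : ℝ}

lemma memLp_two_natVec [NeZero n]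
    (h : IsStationarySwitch sched π α ((1 - ε) • vec ν) σ amax) (hν : memF n ν)
    (hmin0 : 0 < νmin) (hmin : ∀ i j, νmin ≤ ν i j) (hε : 0 < ε) :
    MemLp natVec 2 π := by
  have hpair := h.isStationaryDriftPair_infDist (K := {0}) (κ := 2 * (ε * νmin)) (by positivity)
    fun q => ⟨0, rfl, fun _ => le_rfl, by rw [Metric.infDist_singleton, dist_eq_norm], by
      rw [sub_zero, mul_div_cancel_left₀ _ two_ne_zero]
      refine (h.isMaxWeight.inner_drift_le hν hmin hε.le q).trans (neg_le_neg ?_)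
      gcongr
      exact norm_natVec_le_sum q⟩
  have hD : 0 < (n * amax : ℝ) :=
    mul_pos (Nat.cast_pos.2 (NeZero.pos n)) (Nat.cast_pos.2 h.one_le)
  have hint := hpair.integrable_pow (fun _ => Metric.infDist_nonneg) (by positivity) hD
    (by positivity) 2
  simp only [Metric.infDist_singleton, dist_zero_right] at hint
  have hfst : MeasurePreserving Prod.fst (π.prod α) π := measurePreserving_fst
  rw [memLp_two_iff_integrable_sq_norm Measurable.of_discrete.aestronglyMeasurable]
  exact (hfst.integrable_comp Measurable.of_discrete.aestronglyMeasurable).1 hint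

lemma isStationaryDriftPair_infDist_additiveCone
    (h : IsStationarySwitch sched π α ((1 - ε) • vec ν) σ amax) (hν : memF n ν)
    (hmin0 : 0 < νmin) (hmin : ∀ i j, νmin ≤ ν i j) (hε0 : 0 ≤ ε)
    (hε : ε * ‖vec ν‖ ≤ νmin / 2) :
    IsStationaryDriftPair (π.prod α)
      (fun p => Metric.infDist (natVec p.1) (additiveCone (Fin n) (Fin n)))
      (fun p => Metric.infDist (natVec (step sched p)) (additiveCone (Fin n) (Fin n)))
      (n * amax) (νmin / 4) (4 * (‖(1 - ε) • vec ν‖ ^ 2 + ‖σ‖ ^ 2 + n) / νmin) := by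
  refine h.isStationaryDriftPair_infDist hmin0 fun q => ?_
  obtain ⟨y, hyK, hdist, horth, hpolar⟩ :=
    exists_cone_projection (additiveCone (Fin n) (Fin n)) (natVec q)
  exact ⟨y, hyK, hyK.2, hdist, h.isMaxWeight.inner_collapse_drift_le hν hmin0.le hmin hε0 hε q
    hyK horth hpolar⟩

end IsStationarySwitch

end Drift

section SteadyState

variable {n amax : ℕ} {sched : (Fin n → Fin n → ℕ) → Fin n → Fin n → ℕ}
  {π α : Measure (Fin n → Fin n → ℕ)} {m σ : EuclideanSpace ℝ (Fin n × Fin n)}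

lemma starProjection_sub_natVec [NeZero n] {ν : Fin n → Fin n → ℝ} (hν : memF n ν)
    {s : Fin n → Fin n → ℕ} (hs : IsPerm n s) (ε : ℝ) :
    (additiveSubspace (Fin n) (Fin n)).starProjection ((1 - ε) • vec ν - natVec s) =
      -((ε / n) • vec fun _ _ => 1) := by
  have hn : (n : ℝ) ≠ 0 := NeZero.ne _
  ext ⟨i, j⟩
  rw [starProjection_additiveSubspace_apply]
  simp only [PiLp.sub_apply, PiLp.smul_apply, PiLp.neg_apply, vec_apply, smul_eq_mul,
    Finset.sum_sub_distrib, ← Finset.mul_sum, hν.2.1, hν.2.2, hs.sum_natVec_row,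
    hs.sum_natVec_col, Finset.sum_const, Finset.card_univ, Fintype.card_fin, nsmul_eq_mul]
  field_simp
  ring

lemma norm_starProjection_add_sub_natVec_sq [NeZero n] {ν : Fin n → Fin n → ℝ} (hν : memF n ν)
    {s : Fin n → Fin n → ℕ} (hs : IsPerm n s) (ε : ℝ) (x : EuclideanSpace ℝ (Fin n × Fin n)) :
    ‖(additiveSubspace (Fin n) (Fin n)).starProjection (x + ((1 - ε) • vec ν - natVec s))‖ ^ 2 =
      ‖(additiveSubspace (Fin n) (Fin n)).starProjection x‖ ^ 2 - 2 * (ε / n) * ∑ p, x p +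
        ε ^ 2 := by
  have hn : (n : ℝ) ≠ 0 := NeZero.ne _
  have hone : vec (fun _ _ => 1) ∈ additiveSubspace (Fin n) (Fin n) := ⟨1, 0, fun p => by simp⟩
  have hinner : ⟪(additiveSubspace (Fin n) (Fin n)).starProjection x, vec fun _ _ => 1⟫ =
      ∑ p, x p := by
    rw [Submodule.inner_starProjection_left_eq_right, Submodule.starProjection_eq_self_iff.2 hone,
      PiLp.inner_apply]
    simp
  have hnorm : ‖(ε / n) • vec fun (_ _ : Fin n) => (1 : ℝ)‖ ^ 2 = ε ^ 2 := by
    rw [norm_smul, mul_pow, EuclideanSpace.norm_sq_eq, Real.norm_eq_abs, sq_abs]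
    simp only [vec_apply, norm_one, one_pow, Finset.sum_const, Finset.card_univ,
      Fintype.card_prod, Fintype.card_fin, nsmul_eq_mul, Nat.cast_mul, mul_one]
    field_simp
  rw [map_add, starProjection_sub_natVec hν hs, ← sub_eq_add_neg, norm_sub_sq_real, hnorm,
    inner_smul_right, hinner, mul_assoc]

namespace IsStationarySwitch

lemma integral_comp_step (h : IsStationarySwitch sched π α m σ amax)
    (g : (Fin n → Fin n → ℕ) → ℝ) : ∫ p, g (step sched p) ∂π.prod α = ∫ q, g q ∂π := by
  rw [← integral_map Measurable.of_discrete.aemeasurable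
    Measurable.of_discrete.aestronglyMeasurable, h.measurePreserving.map_eq]

lemma abs_inner_starProjection_step_le (h : IsStationarySwitch sched π α m σ amax)
    (p : (Fin n → Fin n → ℕ) × (Fin n → Fin n → ℕ)) :
    |⟪(additiveSubspace (Fin n) (Fin n)).starProjection (natVec (step sched p)),
        (additiveSubspace (Fin n) (Fin n)).starProjection
          (unusedService p.1 p.2 (sched p.1))⟫| ≤
      Metric.infDist (natVec (step sched p)) (additiveCone (Fin n) (Fin n)) *
        √(∑ i, unusedService p.1 p.2 (sched p.1) i) := by
  have hs := (h.isMaxWeight p.1).1.1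
  rw [← norm_unusedService_sq hs, Real.sqrt_sq (norm_nonneg _)]
  exact abs_inner_starProjection_le (additiveCone (Fin n) (Fin n)).nonempty
    additiveCone_subset (inner_nextQ_unusedService hs)

lemma memLp_natVec_step (h : IsStationarySwitch sched π α m σ amax) (hπ : MemLp natVec 2 π) :
    MemLp (fun p => natVec (step sched p)) 2 (π.prod α) :=
  hπ.comp_measurePreserving h.measurePreserving

variable [IsProbabilityMeasure π] [IsProbabilityMeasure α]

lemma memLp_natVec_add_sub (h : IsStationarySwitch sched π α m σ amax) (hπ : MemLp natVec 2 π) :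
    MemLp (fun p => natVec p.1 + (natVec p.2 - natVec (sched p.1))) 2 (π.prod α) := by
  have hsched : MemLp (fun p => natVec (sched p.1)) 2 (π.prod α) :=
    .of_bound Measurable.of_discrete.aestronglyMeasurable √n (ae_of_all _ fun p =>
      Real.le_sqrt_of_sq_le (h.isMaxWeight p.1).1.norm_natVec_sq.le)
  exact (hπ.comp_measurePreserving measurePreserving_fst).add
    ((h.arrival.memLp.comp_measurePreserving measurePreserving_snd).sub hsched)

lemma memLp_unusedService (h : IsStationarySwitch sched π α m σ amax) (hπ : MemLp natVec 2 π) :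
    MemLp (fun p => unusedService p.1 p.2 (sched p.1)) 2 (π.prod α) :=
  (h.memLp_natVec_step hπ).sub (h.memLp_natVec_add_sub hπ)

lemma integrable_sum_unusedService
    (h : IsStationarySwitch sched π α m σ amax) (hπ : MemLp natVec 2 π) :
    Integrable (fun p => ∑ i, unusedService p.1 p.2 (sched p.1) i) (π.prod α) :=
  integrable_finsetSum _ fun i _ =>
    ((h.memLp_unusedService hπ).integrable one_le_two).eval_piLp i

lemma integral_norm_sq_map_add_sub (h : IsStationarySwitch sched π α m σ amax)
    (hπ : MemLp natVec 2 π) {F : Type*} [NormedAddCommGroup F] [InnerProductSpace ℝ F]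
    (L : EuclideanSpace ℝ (Fin n × Fin n) →L[ℝ] F) :
    ∫ p, ‖L (natVec p.1 + (natVec p.2 - natVec (sched p.1)))‖ ^ 2 ∂π.prod α =
      ∫ q, (∑ i, σ i ^ 2 * ‖L (EuclideanSpace.single i 1)‖ ^ 2 +
        ‖L (natVec q + (m - natVec (sched q)))‖ ^ 2) ∂π := by
  have hmemLp : MemLp (fun p => L (natVec p.1 + (natVec p.2 - natVec (sched p.1)))) 2
      (π.prod α) := L.comp_memLp' (h.memLp_natVec_add_sub hπ)
  rw [integral_prod _ (hmemLp.integrable_norm_pow two_ne_zero)]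
  refine integral_congr_ae (ae_of_all _ fun q => ?_)
  simpa only [← map_add, ← map_sub, add_sub_left_comm] using
    h.arrival.integral_norm_sq_map_add L (L (natVec q - natVec (sched q)))

lemma integral_norm_sq_map_add_sub_eq_step (h : IsStationarySwitch sched π α m σ amax)
    (hπ : MemLp natVec 2 π) {F : Type*} [NormedAddCommGroup F] [InnerProductSpace ℝ F]
    (L : EuclideanSpace ℝ (Fin n × Fin n) →L[ℝ] F) :
    ∫ p, ‖L (natVec p.1 + (natVec p.2 - natVec (sched p.1)))‖ ^ 2 ∂π.prod α =
      ∫ q, ‖L (natVec q)‖ ^ 2 ∂π -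
        2 * ∫ p, ⟪L (natVec (step sched p)), L (unusedService p.1 p.2 (sched p.1))⟫ ∂π.prod α +
        ∫ p, ‖L (unusedService p.1 p.2 (sched p.1))‖ ^ 2 ∂π.prod α := by
  have hstep : MemLp (fun p => L (natVec (step sched p))) 2 (π.prod α) :=
    L.comp_memLp' (h.memLp_natVec_step hπ)
  have hunused : MemLp (fun p => L (unusedService p.1 p.2 (sched p.1))) 2 (π.prod α) :=
    L.comp_memLp' (h.memLp_unusedService hπ)
  have hinner := integrable_inner_of_memLp_two hstep hunused
  have hexpand (p : (Fin n → Fin n → ℕ) × (Fin n → Fin n → ℕ)) :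
      ‖L (natVec p.1 + (natVec p.2 - natVec (sched p.1)))‖ ^ 2 =
        ‖L (natVec (step sched p))‖ ^ 2 -
          2 * ⟪L (natVec (step sched p)), L (unusedService p.1 p.2 (sched p.1))⟫ +
          ‖L (unusedService p.1 p.2 (sched p.1))‖ ^ 2 := by
    rw [← norm_sub_sq_real, ← map_sub]
    simp only [unusedService, step, sub_sub_cancel]
  simp_rw [hexpand]
  rw [integral_add (by exact (hstep.integrable_norm_pow two_ne_zero).sub (hinner.const_mul 2))
    (hunused.integrable_norm_pow two_ne_zero), integral_sub
    (hstep.integrable_norm_pow two_ne_zero) (hinner.const_mul 2), integral_const_mul]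
  congr 2
  exact h.integral_comp_step fun q => ‖L (natVec q)‖ ^ 2

end IsStationarySwitch

lemma integrable_sum_natVec (hπ : Integrable natVec π) :
    Integrable (fun q => ∑ p : Fin n × Fin n, natVec q p) π :=
  integrable_finsetSum _ fun p _ => hπ.eval_piLp p

namespace IsStationarySwitch

variable [IsProbabilityMeasure π] [IsProbabilityMeasure α] {ν : Fin n → Fin n → ℝ} {ε : ℝ}

lemma integral_norm_sq_starProjection_add_sub [NeZero n]
    (h : IsStationarySwitch sched π α ((1 - ε) • vec ν) σ amax) (hν : memF n ν)
    (hπ : MemLp natVec 2 π) :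
    ∫ p, ‖(additiveSubspace (Fin n) (Fin n)).starProjection
        (natVec p.1 + (natVec p.2 - natVec (sched p.1)))‖ ^ 2 ∂π.prod α =
      ∫ q, ‖(additiveSubspace (Fin n) (Fin n)).starProjection (natVec q)‖ ^ 2 ∂π -
        2 * (ε / n) * ∫ q, ∑ p, natVec q p ∂π +
        ((2 / n - 1 / n ^ 2) * ‖σ‖ ^ 2 + ε ^ 2) := by
  have hnorm : Integrable
      (fun q => ‖(additiveSubspace (Fin n) (Fin n)).starProjection (natVec q)‖ ^ 2) π :=
    ((additiveSubspace (Fin n) (Fin n)).starProjection.comp_memLp' hπ).integrable_norm_pow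
      two_ne_zero
  have hsum := (integrable_sum_natVec (hπ.integrable one_le_two)).const_mul (2 * (ε / n))
  rw [h.integral_norm_sq_map_add_sub hπ]
  simp_rw [norm_starProjection_add_sub_natVec_sq hν (h.isMaxWeight _).1,
    norm_starProjection_single_sq, ← Finset.sum_mul, ← EuclideanSpace.real_norm_sq_eq]
  rw [integral_add (integrable_const _) (by exact (hnorm.sub hsum).add (integrable_const _)),
    integral_add (by exact hnorm.sub hsum) (integrable_const _), integral_sub hnorm hsum,
    integral_const_mul (2 * (ε / n))]
  simp only [integral_const, probReal_univ, Fintype.card_fin, one_smul]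
  ring

lemma two_mul_integral_inner_sub_integral_norm_sq [NeZero n]
    (h : IsStationarySwitch sched π α ((1 - ε) • vec ν) σ amax) (hν : memF n ν)
    (hπ : MemLp natVec 2 π) :
    2 * ∫ p, ⟪(additiveSubspace (Fin n) (Fin n)).starProjection (natVec (step sched p)),
        (additiveSubspace (Fin n) (Fin n)).starProjection
          (unusedService p.1 p.2 (sched p.1))⟫ ∂π.prod α -
      ∫ p, ‖(additiveSubspace (Fin n) (Fin n)).starProjection
          (unusedService p.1 p.2 (sched p.1))‖ ^ 2 ∂π.prod α =
      2 * (ε / n) * ∫ q, ∑ p, natVec q p ∂π - ((2 / n - 1 / n ^ 2) * ‖σ‖ ^ 2 + ε ^ 2) := by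
  have hmean := h.integral_norm_sq_starProjection_add_sub hν hπ
  rw [h.integral_norm_sq_map_add_sub_eq_step hπ] at hmean
  linarith

lemma integral_sum_unusedService
    (h : IsStationarySwitch sched π α ((1 - ε) • vec ν) σ amax) (hν : memF n ν)
    (hπ : Integrable natVec π) :
    ∫ p, ∑ i, unusedService p.1 p.2 (sched p.1) i ∂π.prod α = n * ε := by
  have hα : Integrable natVec α := h.arrival.memLp.integrable one_le_two
  have hnext : Integrable (fun p => ∑ i, natVec (step sched p) i) (π.prod α) :=
    h.measurePreserving.integrable_comp_of_integrable (integrable_sum_natVec hπ)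
  have hqueue : Integrable (fun p : _ × _ => ∑ i, natVec p.1 i) (π.prod α) :=
    (integrable_sum_natVec hπ).comp_fst α
  have harrival : Integrable (fun p : _ × _ => ∑ i, natVec p.2 i) (π.prod α) :=
    (integrable_sum_natVec hα).comp_snd π
  have hmean : ∫ a, ∑ i, natVec a i ∂α = n * (1 - ε) := by
    rw [integral_finsetSum _ fun i _ => hα.eval_piLp i]
    simp only [h.arrival.integral_apply, PiLp.smul_apply, vec_apply, smul_eq_mul,
      Fintype.sum_prod_type, ← Finset.mul_sum, hν.2.1, Finset.sum_const, Finset.card_univ,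
      Fintype.card_fin, nsmul_eq_mul, mul_one]
    ring
  calc ∫ p, ∑ i, unusedService p.1 p.2 (sched p.1) i ∂π.prod α
      = ∫ p, (∑ i, natVec (step sched p) i - ∑ i, natVec p.1 i - ∑ i, natVec p.2 i + n)
          ∂π.prod α := by simp_rw [sum_unusedService (h.isMaxWeight _).1, step]
    _ = ∫ p, ∑ i, natVec (step sched p) i ∂π.prod α - ∫ p, ∑ i, natVec p.1 i ∂π.prod α -
          ∫ p, ∑ i, natVec p.2 i ∂π.prod α + n := by
        rw [integral_add (by exact (hnext.sub hqueue).sub harrival) (integrable_const _),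
          integral_sub (by exact hnext.sub hqueue) harrival, integral_sub hnext hqueue,
          integral_const, probReal_univ, one_smul]
    _ = n * ε := by
        rw [h.integral_comp_step fun q => ∑ i, natVec q i,
          integral_fun_fst fun q => ∑ i, natVec q i, integral_fun_snd fun a => ∑ i, natVec a i,
          hmean, probReal_univ, probReal_univ, one_smul, one_smul]
        ring

lemma integral_norm_sq_starProjection_unusedService_le [NeZero n]
    (h : IsStationarySwitch sched π α ((1 - ε) • vec ν) σ amax) (hν : memF n ν)
    (hπ : MemLp natVec 2 π) :
    ∫ p, ‖(additiveSubspace (Fin n) (Fin n)).starProjection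
      (unusedService p.1 p.2 (sched p.1))‖ ^ 2 ∂π.prod α ≤ 2 * ε := by
  have hn : (n : ℝ) ≠ 0 := NeZero.ne _
  calc ∫ p, ‖(additiveSubspace (Fin n) (Fin n)).starProjection
        (unusedService p.1 p.2 (sched p.1))‖ ^ 2 ∂π.prod α
      ≤ ∫ p, 2 / n * ∑ i, unusedService p.1 p.2 (sched p.1) i ∂π.prod α :=
        integral_mono_of_nonneg (ae_of_all _ fun _ => by positivity)
          ((h.integrable_sum_unusedService hπ).const_mul _)
          (ae_of_all _ fun p => norm_starProjection_unusedService_sq_le (h.isMaxWeight p.1).1)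
    _ = 2 * ε := by
        rw [integral_const_mul, h.integral_sum_unusedService hν (hπ.integrable one_le_two)]
        field_simp

lemma abs_integral_inner_starProjection_le
    (h : IsStationarySwitch sched π α ((1 - ε) • vec ν) σ amax) (hν : memF n ν)
    (hπ : MemLp natVec 2 π) {r : ℝ} (hr : 2 ≤ r) (hdist : Integrable (fun q =>
      Metric.infDist (natVec q) (additiveCone (Fin n) (Fin n)) ^ r) π) :
    |∫ p, ⟪(additiveSubspace (Fin n) (Fin n)).starProjection (natVec (step sched p)),
        (additiveSubspace (Fin n) (Fin n)).starProjection
          (unusedService p.1 p.2 (sched p.1))⟫ ∂π.prod α| ≤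
      (∫ q, Metric.infDist (natVec q) (additiveCone (Fin n) (Fin n)) ^ r ∂π) ^ (1 / r) *
        (n * ε) ^ (1 - 1 / r) := by
  set K := (additiveCone (Fin n) (Fin n) : Set (EuclideanSpace ℝ (Fin n × Fin n)))
  have hmemLp : MemLp (fun p => Metric.infDist (natVec (step sched p)) K) 2 (π.prod α) := by
    refine (h.memLp_natVec_step hπ).of_le Measurable.of_discrete.aestronglyMeasurable
      (ae_of_all _ fun p => ?_)
    rw [Real.norm_of_nonneg Metric.infDist_nonneg, ← dist_zero_right]
    exact Metric.infDist_le_dist_of_mem (zero_mem (additiveCone (Fin n) (Fin n)))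
  have hnorm (p : (Fin n → Fin n → ℕ) × (Fin n → Fin n → ℕ)) :
      √(∑ i, unusedService p.1 p.2 (sched p.1) i) = ‖unusedService p.1 p.2 (sched p.1)‖ := by
    rw [← norm_unusedService_sq (h.isMaxWeight p.1).1.1, Real.sqrt_sq (norm_nonneg _)]
  have hint : Integrable (fun p => Metric.infDist (natVec (step sched p)) K *
      √(∑ i, unusedService p.1 p.2 (sched p.1) i)) (π.prod α) := by
    simp_rw [hnorm]
    exact hmemLp.integrable_mul (h.memLp_unusedService hπ).norm
  calc |∫ p, ⟪(additiveSubspace (Fin n) (Fin n)).starProjection (natVec (step sched p)),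
        (additiveSubspace (Fin n) (Fin n)).starProjection
          (unusedService p.1 p.2 (sched p.1))⟫ ∂π.prod α|
      ≤ ∫ p, Metric.infDist (natVec (step sched p)) K *
          √(∑ i, unusedService p.1 p.2 (sched p.1) i) ∂π.prod α := by
        rw [← Real.norm_eq_abs]
        exact norm_integral_le_of_norm_le hint (ae_of_all _ h.abs_inner_starProjection_step_le)
    _ ≤ (∫ p, Metric.infDist (natVec (step sched p)) K ^ r ∂π.prod α) ^ (1 / r) *
          (∫ p, ∑ i, unusedService p.1 p.2 (sched p.1) i ∂π.prod α) ^ (1 - 1 / r) :=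
        integral_mul_sqrt_le hr (fun _ => Metric.infDist_nonneg)
          (fun p => sum_unusedService_eq_zero_or_one_le (h.isMaxWeight p.1).1.1)
          Measurable.of_discrete.aestronglyMeasurable
          (h.measurePreserving.integrable_comp_of_integrable hdist)
          (h.integrable_sum_unusedService hπ)
    _ = (∫ q, Metric.infDist (natVec q) K ^ r ∂π) ^ (1 / r) * (n * ε) ^ (1 - 1 / r) := by
        rw [h.integral_comp_step fun q => Metric.infDist (natVec q) K ^ r,
          h.integral_sum_unusedService hν (hπ.integrable one_le_two)]

end IsStationarySwitch

end SteadyState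

lemma factorial_le_stirling {r : ℕ} (hr : r ≠ 0) :
    (r ! : ℝ) ≤ √r * Real.exp 1 * (r / Real.exp 1) ^ r := by
  obtain ⟨k, rfl⟩ := Nat.exists_eq_succ_of_ne_zero hr
  have hanti : Stirling.stirlingSeq k.succ ≤ Stirling.stirlingSeq 1 :=
    Stirling.stirlingSeq'_antitone k.zero_le
  rw [Stirling.stirlingSeq_one, Stirling.stirlingSeq, div_le_iff₀ (by positivity)] at hanti
  refine hanti.trans_eq ?_
  rw [Real.sqrt_mul zero_le_two]
  field_simp

/-- The constant `M_r` of the moment bound: it dominates the `r`-th root of `a ^ r + b ^ r * r !`,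
the Stirling bound standing for the factorial. -/
noncomputable def momentConst (r : ℕ) (a b : ℝ) : ℝ :=
  (2 : ℝ) ^ (1 / r : ℝ) * max a ((√r * Real.exp 1) ^ (1 / r : ℝ) * (r / Real.exp 1) * b)

lemma add_pow_mul_factorial_rpow_le {a b : ℝ} (ha : 0 ≤ a) (hb : 0 ≤ b) {r : ℕ} (hr : r ≠ 0) :
    (a ^ r + b ^ r * r !) ^ (1 / r : ℝ) ≤ momentConst r a b := by
  set c := (√r * Real.exp 1) ^ (1 / r : ℝ) * (r / Real.exp 1) * b with hc
  have hfact : b ^ r * r ! ≤ c ^ r := by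
    calc b ^ r * r ! ≤ b ^ r * (√r * Real.exp 1 * (r / Real.exp 1) ^ r) := by
          gcongr
          exact factorial_le_stirling hr
      _ = c ^ r := by
          rw [hc, mul_pow, mul_pow, one_div, Real.rpow_inv_natCast_pow (by positivity) hr]
          ring
  have hsum : a ^ r + b ^ r * r ! ≤ 2 * max a c ^ r := by
    rw [two_mul]
    gcongr
    · exact le_max_left _ _
    · exact hfact.trans (pow_le_pow_left₀ (by positivity) (le_max_right _ _) r)
  calc (a ^ r + b ^ r * r !) ^ (1 / r : ℝ) ≤ (2 * max a c ^ r) ^ (1 / r : ℝ) := by gcongr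
    _ = momentConst r a b := by
        rw [Real.mul_rpow zero_le_two (by positivity), momentConst, ← hc, one_div,
          Real.pow_rpow_inv_natCast (by positivity) hr]

section TwoSidedBound

variable {n amax : ℕ} {sched : (Fin n → Fin n → ℕ) → Fin n → Fin n → ℕ}
  {π α : Measure (Fin n → Fin n → ℕ)} {σ : EuclideanSpace ℝ (Fin n × Fin n)}
  [IsProbabilityMeasure π] [IsProbabilityMeasure α]
  {ν : Fin n → Fin n → ℝ} {νmin ε : ℝ}

lemma memF.le_one (hν : memF n ν) (i j : Fin n) : ν i j ≤ 1 :=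
  (Finset.single_le_sum (fun k _ => hν.1 i k) (Finset.mem_univ j)).trans_eq (hν.2.1 i)

namespace IsStationarySwitch

lemma integrable_infDist_pow [NeZero n]
    (h : IsStationarySwitch sched π α ((1 - ε) • vec ν) σ amax) (hν : memF n ν)
    (hmin0 : 0 < νmin) (hmin : ∀ i j, νmin ≤ ν i j) (hε0 : 0 ≤ ε)
    (hε : ε * ‖vec ν‖ ≤ νmin / 2) (r : ℕ) :
    Integrable (fun q => Metric.infDist (natVec q) (additiveCone (Fin n) (Fin n)) ^ r) π := by
  have hD : 0 < (n * amax : ℝ) :=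
    mul_pos (Nat.cast_pos.2 (NeZero.pos n)) (Nat.cast_pos.2 h.one_le)
  have hfst : MeasurePreserving Prod.fst (π.prod α) π := measurePreserving_fst
  exact (hfst.integrable_comp Measurable.of_discrete.aestronglyMeasurable).1 <|
    (h.isStationaryDriftPair_infDist_additiveCone hν hmin0 hmin hε0 hε).integrable_pow
      (fun _ => Metric.infDist_nonneg) (by positivity) hD (by positivity) r

lemma integral_infDist_pow_le [NeZero n]
    (h : IsStationarySwitch sched π α ((1 - ε) • vec ν) σ amax) (hν : memF n ν)
    (hmin0 : 0 < νmin) (hmin : ∀ i j, νmin ≤ ν i j) (hε0 : 0 ≤ ε)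
    (hε : ε * ‖vec ν‖ ≤ νmin / 2) {r : ℕ} (hr : r ≠ 0) :
    (∫ q, Metric.infDist (natVec q) (additiveCone (Fin n) (Fin n)) ^ r ∂π) ^ (1 / r : ℝ) ≤
      momentConst r (8 * (‖(1 - ε) • vec ν‖ ^ 2 + ‖σ‖ ^ 2 + n) / νmin)
        (16 * (n * amax / νmin) * (n * amax + 1)) := by
  have hD : 0 < (n * amax : ℝ) :=
    mul_pos (Nat.cast_pos.2 (NeZero.pos n)) (Nat.cast_pos.2 h.one_le)
  have hmin1 : νmin ≤ 1 := (hmin 0 0).trans (hν.le_one 0 0)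
  have hmoment := (h.isStationaryDriftPair_infDist_additiveCone hν hmin0 hmin hε0
    hε).integral_pow_le (fun _ => Metric.infDist_nonneg) (by positivity) hD (by positivity) r
  rw [integral_fun_fst fun q : Fin n → Fin n → ℕ =>
    Metric.infDist (natVec q) (additiveCone (Fin n) (Fin n)) ^ r, probReal_univ,
    one_smul] at hmoment
  refine le_trans ?_ (add_pow_mul_factorial_rpow_le (by positivity) (by positivity) hr)
  have hdist : 0 ≤ ∫ q, Metric.infDist (natVec q) (additiveCone (Fin n) (Fin n)) ^ r ∂π :=
    integral_nonneg fun _ => pow_nonneg Metric.infDist_nonneg r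
  gcongr
  refine hmoment.trans ?_
  gcongr ?_ ^ r + ?_ ^ r * _
  · exact le_of_eq (by ring)
  · calc 4 * (n * amax) * (n * amax + νmin / 4) / (νmin / 4)
        = 16 * (n * amax / νmin) * (n * amax + νmin / 4) := by field_simp; ring
      _ ≤ 16 * (n * amax / νmin) * (n * amax + 1) := by gcongr; linarith

lemma integral_sum_natVec_mem_Icc [NeZero n]
    (h : IsStationarySwitch sched π α ((1 - ε) • vec ν) σ amax) (hν : memF n ν)
    (hπ : MemLp natVec 2 π) (hε : 0 < ε) {r : ℕ} (hr : 2 ≤ r)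
    (hint : Integrable (fun q => Metric.infDist (natVec q) (additiveCone (Fin n) (Fin n)) ^ r) π)
    {M : ℝ} (hM : (∫ q, Metric.infDist (natVec q) (additiveCone (Fin n) (Fin n)) ^ r ∂π) ^
      (1 / r : ℝ) ≤ M) :
    ∫ q, ∑ p, natVec q p ∂π ∈ Set.Icc
      ((1 - 1 / (2 * n)) * ‖σ‖ ^ 2 / ε + n * ε / 2 - n -
        (n : ℝ) ^ (2 - 1 / r : ℝ) * ε ^ (-1 / r : ℝ) * M)
      ((1 - 1 / (2 * n)) * ‖σ‖ ^ 2 / ε + n * ε / 2 +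
        (n : ℝ) ^ (2 - 1 / r : ℝ) * ε ^ (-1 / r : ℝ) * M) := by
  have hn : 0 < (n : ℝ) := Nat.cast_pos.2 (NeZero.pos n)
  have hidentity := h.two_mul_integral_inner_sub_integral_norm_sq hν hπ
  have hZ := h.integral_norm_sq_starProjection_unusedService_le hν hπ
  have hW := h.abs_integral_inner_starProjection_le hν hπ (r := r) (mod_cast hr)
    (by simpa only [Real.rpow_natCast] using hint)
  set W := ∫ p, ⟪(additiveSubspace (Fin n) (Fin n)).starProjection (natVec (step sched p)),
        (additiveSubspace (Fin n) (Fin n)).starProjection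
          (unusedService p.1 p.2 (sched p.1))⟫ ∂π.prod α
  set Z := ∫ p, ‖(additiveSubspace (Fin n) (Fin n)).starProjection
          (unusedService p.1 p.2 (sched p.1))‖ ^ 2 ∂π.prod α
  have hWM : n / ε * |W| ≤ n / ε * (M * (n * ε) ^ (1 - 1 / r : ℝ)) := by
    simp_rw [Real.rpow_natCast] at hW
    gcongr
    exact hW.trans (by gcongr)
  have hpow : n / ε * (M * (n * ε) ^ (1 - 1 / r : ℝ)) =
      (n : ℝ) ^ (2 - 1 / r : ℝ) * ε ^ (-1 / r : ℝ) * M := by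
    rw [Real.mul_rpow hn.le hε.le, show (2 - 1 / r : ℝ) = 1 + (1 - 1 / r) by ring,
      show (-1 / r : ℝ) = 1 - 1 / r - 1 by ring, Real.rpow_add hn, Real.rpow_sub_one hε.ne',
      Real.rpow_one]
    ring
  have hZn : n / ε * (Z / 2) ≤ n := by
    calc n / ε * (Z / 2) ≤ n / ε * (2 * ε / 2) := by gcongr
      _ = n := by field_simp
  have hZn₀ : 0 ≤ n / ε * (Z / 2) :=
    mul_nonneg (by positivity) (div_nonneg (integral_nonneg fun _ => by positivity) zero_le_two)
  have hsolve : ∫ q, ∑ p, natVec q p ∂π =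
      (1 - 1 / (2 * n)) * ‖σ‖ ^ 2 / ε + n * ε / 2 + n / ε * W - n / ε * (Z / 2) := by
    field_simp at hidentity ⊢
    linarith
  rw [hpow, ← abs_of_pos (show 0 < n / ε by positivity), ← abs_mul, abs_le] at hWM
  rw [hsolve]
  constructor <;> linarith

end IsStationarySwitch

end TwoSidedBound

section Model

variable {n : ℕ}

namespace ArrivalDist

variable {A : Fin n → Fin n → ℕ → ℝ≥0∞} {lam sig : Fin n → Fin n → ℝ} {amax : ℕ}

/-- The law of a single arrival count. -/
def entryPMF (hA : ArrivalDist n A lam sig amax) (i j : Fin n) : PMF ℕ :=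
  ⟨A i j, ENNReal.summable.hasSum_iff.2 (hA.1 i j)⟩

/-- The law of the arrival matrix, the product of the laws of its entries. -/
noncomputable def law (hA : ArrivalDist n A lam sig amax) : Measure (Fin n → Fin n → ℕ) :=
  Measure.pi fun i => Measure.pi fun j => (hA.entryPMF i j).toMeasure

variable (hA : ArrivalDist n A lam sig amax)
include hA

instance : IsProbabilityMeasure hA.law := by
  rw [law]
  infer_instance

lemma law_singleton (a : Fin n → Fin n → ℕ) : hA.law {a} = jointA n A a := by
  simp_rw [law, Measure.pi_singleton, PMF.toMeasure_apply_singleton _ _ (.singleton _)]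
  rfl

lemma measurePreserving_eval (i j : Fin n) :
    MeasurePreserving (fun a => a i j) hA.law (hA.entryPMF i j).toMeasure :=
  (MeasureTheory.measurePreserving_eval (fun j => (hA.entryPMF i j).toMeasure) j).comp
    (MeasureTheory.measurePreserving_eval
      (fun i => Measure.pi fun j => (hA.entryPMF i j).toMeasure) i)

lemma ae_entryPMF_le (i j : Fin n) : ∀ᵐ k ∂(hA.entryPMF i j).toMeasure, k ≤ amax := by
  rw [ae_iff, PMF.toMeasure_apply_eq_zero_iff _ .of_discrete, Set.disjoint_left]
  exact fun k hk hlt => hlt (hA.2.1 i j k ((PMF.mem_support_iff _ _).1 hk))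

lemma ae_law_le : ∀ᵐ a ∂hA.law, ∀ i j, a i j ≤ amax :=
  ae_all_iff.2 fun i => ae_all_iff.2 fun j =>
    (hA.measurePreserving_eval i j).quasiMeasurePreserving.ae (hA.ae_entryPMF_le i j)

lemma integrable_entryPMF (i j : Fin n) (f : ℕ → ℝ) :
    Integrable f (hA.entryPMF i j).toMeasure := by
  refine .of_bound Measurable.of_discrete.aestronglyMeasurable
    (∑ k ∈ Finset.Iic amax, ‖f k‖) ?_
  filter_upwards [hA.ae_entryPMF_le i j] with k hk
  exact Finset.single_le_sum (f := fun k => ‖f k‖) (fun _ _ => norm_nonneg _)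
    (Finset.mem_Iic.2 hk)

lemma integral_comp_apply (i j : Fin n) (f : ℕ → ℝ) :
    ∫ a, f (a i j) ∂hA.law = ∑' k, (A i j k).toReal * f k := by
  have hmp := hA.measurePreserving_eval i j
  rw [← integral_map hmp.measurable.aemeasurable Measurable.of_discrete.aestronglyMeasurable,
    hmp.map_eq, PMF.integral_eq_tsum _ _ (hA.integrable_entryPMF i j f)]
  rfl

lemma memLp_two_natVec : MemLp natVec 2 hA.law := by
  refine .of_eval_piLp fun p => ?_
  refine .of_bound Measurable.of_discrete.aestronglyMeasurable amax ?_
  filter_upwards [hA.ae_law_le] with a ha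
  rw [Real.norm_of_nonneg (natVec_nonneg a p), natVec_apply]
  exact Nat.cast_le.2 (ha p.1 p.2)

lemma iIndepFun_natVec_sub (c : EuclideanSpace ℝ (Fin n × Fin n)) :
    iIndepFun (fun p a => (natVec a - c) p) hA.law := by
  have h := iIndepFun_uncurry_infinitePi' (X := fun i j (k : ℕ) => (k : ℝ) - c (i, j))
    (fun i j => (hA.entryPMF i j).toMeasure) fun _ _ => .of_discrete
  simp_rw [Measure.infinitePi_eq_pi] at h
  exact h

lemma integral_natVec_apply (p : Fin n × Fin n) : ∫ a, natVec a p ∂hA.law = vec lam p :=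
  (hA.integral_comp_apply p.1 p.2 _).trans (hA.2.2.1 p.1 p.2)

lemma integral_natVec_sub_apply (p : Fin n × Fin n) :
    ∫ a, (natVec a - vec lam) p ∂hA.law = 0 := by
  have hint : Integrable (fun a => natVec a p) hA.law :=
    (hA.memLp_two_natVec.integrable one_le_two).eval_piLp p
  simp_rw [PiLp.sub_apply]
  rw [integral_sub hint (integrable_const _), hA.integral_natVec_apply, integral_const,
    probReal_univ, one_smul, sub_self]

lemma hasUncorrelatedCoords_law : HasUncorrelatedCoords hA.law natVec (vec lam) (vec sig) where
  memLp := hA.memLp_two_natVec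
  integral_eq := by
    ext p
    exact ((EuclideanSpace.proj (𝕜 := ℝ) p).integral_comp_comm
      (hA.memLp_two_natVec.integrable one_le_two)).symm.trans (hA.integral_natVec_apply p)
  integral_mul_eq p p' := by
    split_ifs with hp
    · subst hp
      simp_rw [← sq]
      exact (hA.integral_comp_apply p.1 p.2 fun k => (k - lam p.1 p.2) ^ 2).trans
        (hA.2.2.2 p.1 p.2)
    · rw [((hA.iIndepFun_natVec_sub _).indepFun hp).integral_fun_mul_eq_mul_integral
        Measurable.of_discrete.aestronglyMeasurable Measurable.of_discrete.aestronglyMeasurable,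
        hA.integral_natVec_sub_apply, zero_mul]

end ArrivalDist

namespace IsInvariant

variable {P : (Fin n → Fin n → ℕ) → (Fin n → Fin n → ℕ) → ℝ≥0∞}
  {pd : (Fin n → Fin n → ℕ) → ℝ≥0∞}

/-- The law of the queue lengths in steady state. -/
def pmf (hpd : IsInvariant n P pd) : PMF (Fin n → Fin n → ℕ) :=
  ⟨pd, ENNReal.summable.hasSum_iff.2 hpd.1⟩

lemma toMeasure_pmf_singleton (hpd : IsInvariant n P pd) (q : Fin n → Fin n → ℕ) :
    hpd.pmf.toMeasure {q} = pd q :=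
  PMF.toMeasure_apply_singleton _ _ (.singleton _)

lemma etot_eq_lintegral (hpd : IsInvariant n P pd) :
    Etot n pd = ∫⁻ q, ENNReal.ofReal (∑ p, natVec q p) ∂hpd.pmf.toMeasure := by
  rw [lintegral_countable', Etot]
  refine tsum_congr fun q => ?_
  rw [hpd.toMeasure_pmf_singleton, mul_comm,
    ENNReal.ofReal_sum_of_nonneg fun p _ => natVec_nonneg q p, Fintype.sum_prod_type]
  simp only [natVec_apply, ENNReal.ofReal_natCast]

lemma etot_eq (hpd : IsInvariant n P pd) (hint : Integrable natVec hpd.pmf.toMeasure) :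
    Etot n pd = ENNReal.ofReal (∫ q, ∑ p, natVec q p ∂hpd.pmf.toMeasure) := by
  rw [hpd.etot_eq_lintegral, ofReal_integral_eq_lintegral_ofReal (integrable_sum_natVec hint)
    (ae_of_all _ fun q => Finset.sum_nonneg fun p _ => natVec_nonneg q p)]

lemma measurePreserving_step {A : Fin n → Fin n → ℕ → ℝ≥0∞}
    {sched : (Fin n → Fin n → ℕ) → Fin n → Fin n → ℕ}
    (hpd : IsInvariant n (kernelMW n A sched) pd) {α : Measure (Fin n → Fin n → ℕ)} [SFinite α]
    (hα : ∀ a, α {a} = jointA n A a) :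
    MeasurePreserving (step sched) (hpd.pmf.toMeasure.prod α) hpd.pmf.toMeasure := by
  classical
  refine ⟨.of_discrete, Measure.ext_of_singleton fun q' => ?_⟩
  have hkernel (q : Fin n → Fin n → ℕ) :
      α (Prod.mk q ⁻¹' (step sched ⁻¹' {q'})) = kernelMW n A sched q q' := by
    rw [← lintegral_indicator_one .of_discrete, lintegral_countable', kernelMW]
    refine tsum_congr fun a => ?_
    simp only [hα, mul_comm (jointA n A a), Set.indicator_apply, Set.mem_preimage,
      Set.mem_singleton_iff, step, Pi.one_apply]
  rw [Measure.map_apply .of_discrete .of_discrete, Measure.prod_apply .of_discrete,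
    lintegral_countable', hpd.toMeasure_pmf_singleton, ← hpd.2 q']
  exact tsum_congr fun q => by rw [hkernel, hpd.toMeasure_pmf_singleton, mul_comm]

end IsInvariant

lemma IsMaxWeight.isStationarySwitch {A : Fin n → Fin n → ℕ → ℝ≥0∞} {lam sig : Fin n → Fin n → ℝ}
    {amax : ℕ} {sched : (Fin n → Fin n → ℕ) → Fin n → Fin n → ℕ}
    {pd : (Fin n → Fin n → ℕ) → ℝ≥0∞} (hsched : IsMaxWeight n sched)
    (hA : ArrivalDist n A lam sig amax) (hamax : 1 ≤ amax)
    (hpd : IsInvariant n (kernelMW n A sched) pd) :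
    IsStationarySwitch sched hpd.pmf.toMeasure hA.law (vec lam) (vec sig) amax where
  isMaxWeight := hsched
  arrival := hA.hasUncorrelatedCoords_law
  arrival_le := hA.ae_law_le
  one_le := hamax
  measurePreserving := hpd.measurePreserving_step hA.law_singleton

lemma normE_eq_norm_vec (x : Fin n → Fin n → ℝ) : normE n x = ‖vec x‖ := by
  rw [normE, ← norm_vec_sq, Real.sqrt_sq (norm_nonneg _)]

end Model

end SwitchModel

/-- Theorem 5.2, fixed-ε version: two-sided steady-state bound on the
expected total queue length under MaxWeight. -/
theorem maxweight_two_sided_bound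
    (n : ℕ) (hn : 1 ≤ n)
    (ν : Fin n → Fin n → ℝ) (hν : memF n ν)
    (νmin : ℝ) (hνmin : IsLeast {x : ℝ | ∃ i j : Fin n, ν i j = x} νmin)
    (hνminpos : 0 < νmin)
    (ε : ℝ) (hε0 : 0 < ε) (hε : ε ≤ νmin / (2 * normE n ν))
    (sig : Fin n → Fin n → ℝ) (amax : ℕ) (hamax : 1 ≤ amax)
    (A : Fin n → Fin n → ℕ → ℝ≥0∞)
    (hA : ArrivalDist n A (fun i j => (1 - ε) * ν i j) sig amax)
    (sched : (Fin n → Fin n → ℕ) → (Fin n → Fin n → ℕ))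
    (hsched : IsMaxWeight n sched)
    (pd : (Fin n → Fin n → ℕ) → ℝ≥0∞)
    (hpd : IsInvariant n (kernelMW n A sched) pd)
    (r : ℕ) (hr : 2 ≤ r)
    (Mr B1 B2 : ℝ)
    (hMr : Mr = (2 : ℝ) ^ ((1 : ℝ) / r) *
          max (8 * ((∑ i, ∑ j, ((1 - ε) * ν i j) ^ 2) + (∑ i, ∑ j, (sig i j) ^ 2) + n) / νmin)
            ((Real.sqrt r * Real.exp 1) ^ ((1 : ℝ) / r) * 16 * (r / Real.exp 1) *
              (n * amax / νmin) * (n * amax + 1)))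
    (hB1 : B1 = -(n * ε) / 2 + n +
      3 * (n : ℝ) ^ ((2 : ℝ) - 1 / r) * ε ^ (-(1 : ℝ) / r) * Mr)
    (hB2 : B2 = n * (1 + ε) / 2 +
      2 * (n : ℝ) ^ ((2 : ℝ) - 1 / r) * ε ^ (-(1 : ℝ) / r) * Mr) :
    ENNReal.ofReal ((1 - 1 / (2 * n)) * (∑ i, ∑ j, (sig i j) ^ 2) / ε - B1) ≤ Etot n pd ∧
    Etot n pd ≤ ENNReal.ofReal ((1 - 1 / (2 * n)) * (∑ i, ∑ j, (sig i j) ^ 2) / ε + B2) := by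
  have : NeZero n := ⟨Nat.one_le_iff_ne_zero.1 hn⟩
  have hmin (i j : Fin n) : νmin ≤ ν i j := hνmin.2 ⟨i, j, rfl⟩
  have hsmall : ε * ‖vec ν‖ ≤ νmin / 2 := by
    rw [normE_eq_norm_vec, ← div_div] at hε
    exact mul_le_of_le_div₀ (by positivity) (norm_nonneg _) hε
  have h : IsStationarySwitch sched hpd.pmf.toMeasure hA.law ((1 - ε) • vec ν) (vec sig) amax :=
    hsched.isStationarySwitch hA hamax hpd
  have hπ := h.memLp_two_natVec hν hνminpos hmin hε0
  have hM := (h.integral_infDist_pow_le hν hνminpos hmin hε0.le hsmall (by omega)).trans_eq <|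
    show momentConst r _ _ = Mr by
      rw [hMr, momentConst, ← vec_const_mul, norm_vec_sq, norm_vec_sq]
      ring_nf
  have hMr₀ : 0 ≤ Mr := (Real.rpow_nonneg (MeasureTheory.integral_nonneg fun _ =>
    pow_nonneg Metric.infDist_nonneg r) _).trans hM
  obtain ⟨hlower, hupper⟩ := h.integral_sum_natVec_mem_Icc hν hπ hε0 hr
    (h.integrable_infDist_pow hν hνminpos hmin hε0.le hsmall r) hM
  have hT : 0 ≤ (n : ℝ) ^ (2 - 1 / r : ℝ) * ε ^ (-1 / r : ℝ) * Mr := by positivity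
  rw [hpd.etot_eq (hπ.integrable one_le_two), ← norm_vec_sq]
  constructor <;> refine ENNReal.ofReal_le_ofReal ?_ <;> linarith
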